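/- arXiv:1503.03283 — 2 statements merged into one kernel-verified Lean document; each statement's English description precedes it below -/
import Mathlib

section
/- For every odd prime p ≥ 5, the complete bipartite graph K_{p²,p²} admits an acyclic proper edge coloring using p² + 2 colors. -/
open SimpleGraph

/-- A proper edge coloring of `G` with `k` colors: any two distinct edges
sharing a vertex receive different colors. -/
def IsProperEdgeColoring {V : Type*} (G : SimpleGraph V) {k : ℕ}
    (C : G.edgeSet → Fin k) : Prop :=
  ∀ e f : G.edgeSet, e ≠ f →
    (∃ v : V, v ∈ (e : Sym2 V) ∧ v ∈ (f : Sym2 V)) → C e ≠ C f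

/-- An edge coloring is acyclic if no cycle of `G` is bichromatic, i.e. no cycle
has all its edges colored with only two colors. -/
def IsAcyclicEdgeColoring {V : Type*} (G : SimpleGraph V) {k : ℕ}
    (C : G.edgeSet → Fin k) : Prop :=
  ∀ (v : V) (w : G.Walk v v), w.IsCycle →
    ¬ ∃ c₁ c₂ : Fin k, ∀ (e : Sym2 V) (he : e ∈ w.edges),
      C ⟨e, w.edges_subset_edgeSet he⟩ = c₁ ∨ C ⟨e, w.edges_subset_edgeSet he⟩ = c₂

/-- The acyclic chromatic index: the least `k` such that `G` admits an acyclic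
proper edge coloring with `k` colors. -/
noncomputable def acyclicChromaticIndex {V : Type*} (G : SimpleGraph V) : ℕ :=
  sInf {k : ℕ | ∃ C : G.edgeSet → Fin k,
    IsProperEdgeColoring G C ∧ IsAcyclicEdgeColoring G C}

/-!
A proper edge coloring of a complete bipartite graph is an array, and the rows met by a bichromatic
cycle form a set which alternating moves along rows and columns cannot leave. Both vertex classes
are identified with `𝔽_p × 𝔽_p`.

Color the edge between `a` and `b` by `a - b`, corrected on the axes `a.1 = 0` and `b.2 = 0`. Along
a cycle with two of these colors the point `(a.1, b.2)` is translated by a constant vector, except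
for kicks on the two axes. When the ratio `ν` of the kicks is not a square, they make the point
visit the whole plane: any two colors form a single Hamiltonian cycle. The edges `{a, g • a}` with
`g` a primitive root contain exactly one edge of every color, so giving them new colors cuts all
these cycles, and it still does so if a single one of them, at `(0, 1)`, keeps its color.

It remains to exclude cycles with a new and an old color. They follow a kicked flow `z ↦ g • z + c`,
whose fixed point is the vertex that has lost its edge of the old color. Since `g` is a primitive
root, an orbit sweeps out all points of a line other than the fixed point unless it is kicked. Two
new colors can therefore be distributed in such a way that each set which is invariant under one of
these flows and avoids its fixed point contains `(0, 1)` or meets both new colors.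
-/

section AcyclicArray

variable {α β κ α' β' κ' : Type*} {C : α → β → κ}

/-- The set `A` of rows is closed under moving along the row to the entry `c` and from there along
the column to the entry `c'`, and these moves exist. The left vertices of a cycle colored with `c`
and `c'` form such a set for both orders of the two colors. -/
def Alternates (C : α → β → κ) (c c' : κ) (A : Set α) : Prop :=
  ∀ a ∈ A, ∃ b, C a b = c ∧ ∃ a' ∈ A, C a' b = c'

/-- The arrays whose entries are the colors of an acyclic proper edge coloring of the complete
bipartite graph between rows and columns. -/
structure IsAcyclicArray (C : α → β → κ) : Prop where
  row_injective : ∀ a, Function.Injective (C a)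
  col_injective : ∀ b, Function.Injective (C · b)
  not_alternates : ∀ c c' A, c ≠ c' → A.Nonempty → Alternates C c c' A → ¬ Alternates C c' c A

theorem Alternates.image_equiv {c c' : κ'} {A : Set α'} (eα : α' ≃ α) (eβ : β' ≃ β) (eκ : κ ≃ κ')
    (h : Alternates (fun a b => eκ (C (eα a) (eβ b))) c c' A) :
    Alternates C (eκ.symm c) (eκ.symm c') (eα '' A) := by
  rintro _ ⟨a, ha, rfl⟩
  obtain ⟨b, hc, a', ha', hc'⟩ := h a ha
  exact ⟨eβ b, eκ.eq_symm_apply.2 hc, eα a', Set.mem_image_of_mem _ ha', eκ.eq_symm_apply.2 hc'⟩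

theorem IsAcyclicArray.congr (hC : IsAcyclicArray C) (eα : α' ≃ α) (eβ : β' ≃ β) (eκ : κ ≃ κ') :
    IsAcyclicArray fun a b => eκ (C (eα a) (eβ b)) where
  row_injective _ := eκ.injective.comp ((hC.row_injective _).comp eβ.injective)
  col_injective b := eκ.injective.comp ((hC.col_injective (eβ b)).comp eα.injective)
  not_alternates _ _ _ hcc hA h h' := hC.not_alternates _ _ _ (eκ.symm.injective.ne hcc)
    (hA.image eα) (h.image_equiv eα eβ eκ) (h'.image_equiv eα eβ eκ)

end AcyclicArray

section BichromaticCycle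

variable {V : Type*} {G : SimpleGraph V} {k : ℕ} {C : G.edgeSet → Fin k} {c₁ c₂ : Fin k} {v : V}
  {w : G.Walk v v}

theorem IsProperEdgeColoring.exists_adj_of_bichromatic (hC : IsProperEdgeColoring G C)
    (hw : w.IsCycle) (hc : ∀ (e : Sym2 V) (he : e ∈ w.edges),
      C ⟨e, w.edges_subset_edgeSet he⟩ = c₁ ∨ C ⟨e, w.edges_subset_edgeSet he⟩ = c₂)
    {u : V} (hu : u ∈ w.support) :
    c₁ ≠ c₂ ∧ (∃ x, ∃ h : s(u, x) ∈ G.edgeSet, x ∈ w.support ∧ C ⟨s(u, x), h⟩ = c₁) ∧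
      ∃ x, ∃ h : s(u, x) ∈ G.edgeSet, x ∈ w.support ∧ C ⟨s(u, x), h⟩ = c₂ := by
  obtain ⟨x, y, hxy, hN⟩ := Set.ncard_eq_two.1 (hw.ncard_neighborSet_toSubgraph_eq_two hu)
  have hedge {z : V} (hz : z ∈ w.toSubgraph.neighborSet u) : s(u, z) ∈ w.edges :=
    w.mem_edges_toSubgraph.1 hz
  have hx := hedge (z := x) (by simp [hN])
  have hy := hedge (z := y) (by simp [hN])
  have hxG := w.edges_subset_edgeSet hx
  have hyG := w.edges_subset_edgeSet hy
  have hne : C ⟨s(u, x), hxG⟩ ≠ C ⟨s(u, y), hyG⟩ :=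
    hC _ _ (fun h => hxy (Sym2.congr_right.1 (Subtype.mk.inj h)))
      ⟨u, Sym2.mem_mk_left u x, Sym2.mem_mk_left u y⟩
  have hxs := w.snd_mem_support_of_mem_edges hx
  have hys := w.snd_mem_support_of_mem_edges hy
  rcases hc _ hx with h₁ | h₁ <;> rcases hc _ hy with h₂ | h₂
  · exact absurd (h₁.trans h₂.symm) hne
  · exact ⟨h₁ ▸ h₂ ▸ hne, ⟨x, hxG, hxs, h₁⟩, ⟨y, hyG, hys, h₂⟩⟩
  · exact ⟨h₁ ▸ h₂ ▸ hne.symm, ⟨y, hyG, hys, h₂⟩, ⟨x, hxG, hxs, h₁⟩⟩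
  · exact absurd (h₁.trans h₂.symm) hne

end BichromaticCycle

section CompleteBipartite

variable {α β : Type*} {k : ℕ} {C : α → β → Fin k}

theorem exists_inl_inr_of_mem_edgeSet {e : Sym2 (α ⊕ β)}
    (he : e ∈ (completeBipartiteGraph α β).edgeSet) : ∃ a b, e = s(Sum.inl a, Sum.inr b) := by
  induction e with | _ u v
  rcases u with a | b <;> rcases v with a' | b' <;> simp at he
  · exact ⟨a, b', rfl⟩
  · exact ⟨a', b, Sym2.eq_swap⟩

theorem exists_edgeColoring_eq (C : α → β → Fin k) :
    ∃ F : (completeBipartiteGraph α β).edgeSet → Fin k,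
      ∀ a b h, F ⟨s(Sum.inl a, Sum.inr b), h⟩ = C a b := by
  choose row col hrc using fun e : (completeBipartiteGraph α β).edgeSet =>
    exists_inl_inr_of_mem_edgeSet e.2
  refine ⟨fun e => C (row e) (col e), fun a b h => ?_⟩
  have hab := hrc ⟨s(Sum.inl a, Sum.inr b), h⟩
  simp only [Sym2.eq_iff, Sum.inl.injEq, Sum.inr.injEq, reduceCtorEq, and_self, or_false] at hab
  exact congrArg₂ C hab.1.symm hab.2.symm

variable {F : (completeBipartiteGraph α β).edgeSet → Fin k}

theorem IsAcyclicArray.isProperEdgeColoring (hC : IsAcyclicArray C)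
    (hF : ∀ a b h, F ⟨s(Sum.inl a, Sum.inr b), h⟩ = C a b) :
    IsProperEdgeColoring (completeBipartiteGraph α β) F := by
  rintro ⟨e, he⟩ ⟨f, hf⟩ hne ⟨v, hve, hvf⟩ heq
  obtain ⟨a, b, rfl⟩ := exists_inl_inr_of_mem_edgeSet he
  obtain ⟨a', b', rfl⟩ := exists_inl_inr_of_mem_edgeSet hf
  rw [hF, hF] at heq
  rcases v with v | v <;>
    simp only [Sym2.mem_iff, Sum.inl.injEq, Sum.inr.injEq, reduceCtorEq, or_false, false_or]
      at hve hvf <;> subst hve hvf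
  · exact hne (by rw [Subtype.mk.injEq, hC.row_injective _ heq])
  · exact hne (by rw [Subtype.mk.injEq, hC.col_injective _ heq])

theorem alternates_of_support {c₁ c₂ : Fin k}
    (hF : ∀ a b h, F ⟨s(Sum.inl a, Sum.inr b), h⟩ = C a b) {U : Set (α ⊕ β)}
    (h₁ : ∀ u ∈ U, ∃ x, ∃ h, x ∈ U ∧ F ⟨s(u, x), h⟩ = c₁)
    (h₂ : ∀ u ∈ U, ∃ x, ∃ h, x ∈ U ∧ F ⟨s(u, x), h⟩ = c₂) :
    Alternates C c₁ c₂ (Sum.inl ⁻¹' U) := by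
  intro a ha
  obtain ⟨a | b, hab, hb, hc₁⟩ := h₁ _ ha
  · simp at hab
  obtain ⟨a' | b', hab', ha', hc₂⟩ := h₂ _ hb
  · exact ⟨b, by rw [← hc₁, hF], a', ha', by simp only [← hc₂, Sym2.eq_swap (a := Sum.inr b), hF]⟩
  · simp at hab'

theorem IsAcyclicArray.isAcyclicEdgeColoring (hC : IsAcyclicArray C)
    (hF : ∀ a b h, F ⟨s(Sum.inl a, Sum.inr b), h⟩ = C a b) :
    IsAcyclicEdgeColoring (completeBipartiteGraph α β) F := by
  rintro v w hw ⟨c₁, c₂, hc⟩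
  have hadj {u} (hu : u ∈ w.support) :=
    (hC.isProperEdgeColoring hF).exists_adj_of_bichromatic hw hc hu
  have hv := w.start_mem_support
  refine hC.not_alternates c₁ c₂ (Sum.inl ⁻¹' {u | u ∈ w.support}) (hadj hv).1 ?_
    (alternates_of_support hF (fun u hu => (hadj hu).2.1) fun u hu => (hadj hu).2.2)
    (alternates_of_support hF (fun u hu => (hadj hu).2.2) fun u hu => (hadj hu).2.1)
  rcases v with a | b
  · exact ⟨a, hv⟩
  · obtain ⟨-, ⟨a | b', hab, ha, -⟩, -⟩ := hadj hv
    · exact ⟨a, ha⟩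
    · simp at hab

theorem IsAcyclicArray.exists_edgeColoring (hC : IsAcyclicArray C) :
    ∃ F : (completeBipartiteGraph α β).edgeSet → Fin k,
      IsProperEdgeColoring (completeBipartiteGraph α β) F ∧
      IsAcyclicEdgeColoring (completeBipartiteGraph α β) F := by
  obtain ⟨F, hF⟩ := exists_edgeColoring_eq C
  exact ⟨F, hC.isProperEdgeColoring hF, hC.isAcyclicEdgeColoring hF⟩

end CompleteBipartite

section AffineOrbits

variable {K : Type*} [Field K] {g c x a : K}

/-- The point reached at time `s` by the orbit of `x` under the affine map `z ↦ g * z + c`. Time is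
measured by geometric sums: the `k`-th iterate of `x` is the point at time `∑ i < k, g ^ i`, which
makes the orbit affine in the time. -/
def affinePoint (g c x s : K) : K :=
  x + s * (c - (1 - g) * x)

theorem mul_affinePoint_add (g c x s : K) :
    g * affinePoint g c x s + c = affinePoint g c x (g * s + 1) := by
  unfold affinePoint
  ring

@[simp]
theorem affinePoint_time_zero (g c x : K) : affinePoint g c x 0 = x := by
  simp [affinePoint]

theorem affinePoint_zero (g c s : K) : affinePoint g c 0 s = s * c := by
  simp [affinePoint]

theorem affinePoint_of_fixed (hx : (1 - g) * x = c) (s : K) : affinePoint g c x s = x := by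
  simp [affinePoint, hx]

theorem exists_affinePoint_eq_zero (hc : c ≠ 0) (hx : (1 - g) * x ≠ c) :
    ∃ a, (1 - g) * a ≠ 1 ∧ affinePoint g c x a = 0 ∧ ∀ s, affinePoint g c x s = 0 → s = a := by
  have hd : (1 - g) * x - c ≠ 0 := sub_ne_zero.2 hx
  refine ⟨x / ((1 - g) * x - c), fun h => hc ?_, ?_, fun s hs => ?_⟩
  · field_simp at h
    linear_combination h
  · unfold affinePoint
    linear_combination -div_mul_cancel₀ x hd
  · rw [eq_div_iff hd]
    unfold affinePoint at hs
    linear_combination -hs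

/-- The geometric sums `∑ i < k, g ^ i` take every value other than `1 / (1 - g)`, the time at
which, for `g ≠ 1`, affine orbits with multiplier `g` would reach their fixed point. -/
def GeomSumsExhaust (g : K) : Prop :=
  ∀ s, (1 - g) * s ≠ 1 → ∃ k, ∑ i ∈ Finset.range k, g ^ i = s

theorem geom_sum_sub_of_eq_zero {m n : ℕ} (hmn : m ≤ n)
    (hm : ∑ i ∈ Finset.range m, g ^ i = 0) :
    ∑ i ∈ Finset.range (n - m), g ^ i = ∑ i ∈ Finset.range n, g ^ i := by
  have hg : g ^ m = 1 := by
    have hsum : (1 - g) * ∑ i ∈ Finset.range m, g ^ i = 1 - g ^ m := mul_neg_geom_sum g m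
    rw [hm] at hsum
    linear_combination hsum
  conv_rhs => rw [← Nat.add_sub_cancel' hmn, Finset.sum_range_add, hm, zero_add]
  simp only [pow_add, hg, one_mul]

/- Follow the orbit up to its first visit to time `a`: had it come back to time `0` on the way, the
loop could be cut out, giving an earlier visit. -/
theorem GeomSumsExhaust.induction (hg : GeomSumsExhaust g) {P : K → Prop} (ha : (1 - g) * a ≠ 1)
    (zero : P 0) (step : ∀ s, P s → s ≠ a → g * s + 1 ≠ 0 → P (g * s + 1)) : P a := by
  classical
  have hex := hg a ha
  set k := Nat.find hex
  have hka : ∑ i ∈ Finset.range k, g ^ i = a := Nat.find_spec hex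
  have hlt : ∀ i < k, ∑ j ∈ Finset.range i, g ^ j ≠ a := fun i hi => Nat.find_min hex hi
  have hP : ∀ i ≤ k, P (∑ j ∈ Finset.range i, g ^ j) := by
    intro i
    induction i with
    | zero => simpa using zero
    | succ i ih =>
      intro hi
      rw [geom_sum_succ]
      refine step _ (ih (by omega)) (hlt i hi) fun h0 => ?_
      rw [← geom_sum_succ] at h0
      exact hlt (k - (i + 1)) (by omega) ((geom_sum_sub_of_eq_zero hi h0).trans hka)
  exact hka ▸ hP k le_rfl

end AffineOrbits

section KickedFlow

open Set

variable {K : Type*} [Field K] [DecidableEq K] {g c₁ k₁ c₂ k₂ : K} {S T : Set (K × K)}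

/-- The affine move `x ↦ g * x + c` of the first coordinate, diminished by the kick `k` when the
point lies on the axis where the second coordinate vanishes. -/
def kick (g c k : K) (z : K × K) : K × K :=
  (g * z.1 + c - if z.2 = 0 then k else 0, z.2)

/-- The sets `S` and `T` absorb a kicked flow on the plane that alternates between horizontal moves
(from `S` to `T`, kicked on the row `y = 0`) and vertical moves (from `T` to `S`, kicked on the
column `x = 0`). -/
structure KickInvariant (g c₁ k₁ c₂ k₂ : K) (S T : Set (K × K)) : Prop where
  horizontal : MapsTo (kick g c₁ k₁) S T
  vertical : MapsTo (kick g c₂ k₂) (Prod.swap ⁻¹' T) (Prod.swap ⁻¹' S)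

theorem kick_injective (hg : g ≠ 0) (c k : K) : Function.Injective (kick g c k) := by
  rintro ⟨x, y⟩ ⟨x', y'⟩ h
  obtain ⟨h₁, h₂⟩ := Prod.mk.inj h
  obtain rfl : y = y' := h₂
  exact Prod.ext (mul_left_cancel₀ hg (by linear_combination h₁)) rfl

namespace KickInvariant

theorem swap (h : KickInvariant g c₁ k₁ c₂ k₂ S T) :
    KickInvariant g c₂ k₂ c₁ k₁ (Prod.swap ⁻¹' T) (Prod.swap ⁻¹' S) :=
  ⟨h.vertical, h.horizontal⟩

theorem horizontal_mem (h : KickInvariant g c₁ k₁ c₂ k₂ S T) {x y : K} (hy : y = 0 → k₁ = 0)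
    (hxy : (x, y) ∈ S) : (g * x + c₁, y) ∈ T := by
  have hmem := h.horizontal hxy
  rwa [kick, ite_eq_right_iff.2 hy, sub_zero] at hmem

theorem horizontal_mem_row (h : KickInvariant g c₁ k₁ c₂ k₂ S T) {x : K} (hx : (x, 0) ∈ S) :
    (g * x + c₁ - k₁, 0) ∈ T := by
  simpa [kick] using h.horizontal hx

theorem vertical_mem (h : KickInvariant g c₁ k₁ c₂ k₂ S T) {x y : K} (hx : x = 0 → k₂ = 0)
    (hxy : (x, y) ∈ T) : (x, g * y + c₂) ∈ S :=
  h.swap.horizontal_mem hx hxy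

theorem vertical_mem_col (h : KickInvariant g c₁ k₁ c₂ k₂ S T) {y : K} (hy : (0, y) ∈ T) :
    (0, g * y + c₂ - k₂) ∈ S :=
  h.swap.horizontal_mem_row hy

theorem compl [Finite K] (h : KickInvariant g c₁ k₁ c₂ k₂ S T) (hg : g ≠ 0) :
    KickInvariant g c₁ k₁ c₂ k₂ Sᶜ Tᶜ := by
  have hST : S.ncard ≤ T.ncard :=
    ncard_le_ncard_of_injOn _ h.horizontal (kick_injective hg _ _).injOn
  have hTS : (Prod.swap ⁻¹' T).ncard ≤ (Prod.swap ⁻¹' S).ncard :=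
    ncard_le_ncard_of_injOn _ h.vertical (kick_injective hg _ _).injOn
  have hswap (U : Set (K × K)) : (Prod.swap ⁻¹' U).ncard = U.ncard :=
    ncard_preimage_of_injective_subset_range Prod.swap_injective
      (Prod.swap_surjective.range_eq ▸ subset_univ U)
  rw [hswap, hswap] at hTS
  refine ⟨SurjOn.mapsTo_compl ?_ (kick_injective hg _ _),
    SurjOn.mapsTo_compl ?_ (kick_injective hg _ _)⟩
  · exact (eq_of_subset_of_ncard_le h.horizontal.image_subset
      (by rwa [ncard_image_of_injective _ (kick_injective hg _ _)])).ge
  · exact (eq_of_subset_of_ncard_le h.vertical.image_subset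
      (by rwa [ncard_image_of_injective _ (kick_injective hg _ _), hswap, hswap])).ge

theorem mem_affinePoint (h : KickInvariant g c₁ k₁ c₂ k₂ S T) (hg : GeomSumsExhaust g)
    {x y a : K} (hxy : (x, y) ∈ S) (ha : (1 - g) * a ≠ 1)
    (hrow : ∀ s, s ≠ a → (affinePoint g c₁ x s, affinePoint g c₂ y s) ∈ S →
      affinePoint g c₂ y s = 0 → k₁ = 0)
    (hcol : ∀ s, s ≠ 0 → ∀ y', (affinePoint g c₁ x s, y') ∈ T →
      affinePoint g c₁ x s = 0 → k₂ = 0) :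
    (affinePoint g c₁ x a, affinePoint g c₂ y a) ∈ S := by
  refine hg.induction (P := fun s => (affinePoint g c₁ x s, affinePoint g c₂ y s) ∈ S) ha
    (by simpa using hxy) fun s hs hsa hs0 => ?_
  have hT := h.horizontal_mem (hrow s hsa hs) hs
  rw [mul_affinePoint_add] at hT
  simpa only [mul_affinePoint_add] using h.vertical_mem (hcol _ hs0 _ hT) hT

theorem mem_dilation {f₁ f₂ : K} (h : KickInvariant g ((1 - g) * f₁) k₁ ((1 - g) * f₂) k₂ S T)
    (hg : GeomSumsExhaust g) (hg1 : g ≠ 1) {x y t : K} (hxy : (x, y) ∈ S)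
    (hrow : ∀ t, f₂ + t * (y - f₂) = 0 → k₁ = 0) (hcol : ∀ t, f₁ + t * (x - f₁) = 0 → k₂ = 0)
    (ht : t ≠ 0) : (f₁ + t * (x - f₁), f₂ + t * (y - f₂)) ∈ S := by
  have hd : 1 - g ≠ 0 := sub_ne_zero.2 hg1.symm
  have hpoint (f z s : K) :
      affinePoint g ((1 - g) * f) z s = f + (1 - (1 - g) * s) * (z - f) := by
    unfold affinePoint
    ring
  have hmem := h.mem_affinePoint hg (a := (1 - t) / (1 - g)) hxy
    (by rwa [mul_div_cancel₀ _ hd, Ne, sub_eq_self])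
    (fun s _ _ h0 => hrow _ (hpoint f₂ y s ▸ h0)) (fun s _ _ _ h0 => hcol _ (hpoint f₁ x s ▸ h0))
  rwa [hpoint, hpoint, mul_div_cancel₀ _ hd, sub_sub_cancel] at hmem

theorem exists_mem_col (h : KickInvariant g c₁ k₁ c₂ k₂ S T) (hg : GeomSumsExhaust g)
    (hrow : ∀ x, (x, 0) ∈ S → k₁ = 0) (hc₁ : c₁ ≠ 0) {x y : K} (hxy : (x, y) ∈ S)
    (hx : (1 - g) * x ≠ c₁) : ∃ y', (0, y') ∈ S := by
  by_contra! hS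
  have hT (y' : K) : (0, y') ∉ T := fun hy' => hS _ (h.vertical_mem_col hy')
  obtain ⟨a, ha, hxa, -⟩ := exists_affinePoint_eq_zero hc₁ hx
  have hmem := h.mem_affinePoint hg hxy ha (fun s _ hs h0 => hrow _ (h0 ▸ hs))
    (fun s _ y' hy' h0 => absurd (h0 ▸ hy') (hT y'))
  exact hS _ (hxa ▸ hmem)

/- The flow started on the column returns to it at time `-1 / g`, half a step before time `0`. -/
theorem col_mem_right (h : KickInvariant g c₁ k₁ c₂ k₂ S T) (hg : GeomSumsExhaust g)
    (hg0 : g ≠ 0) (hrow : ∀ x, (x, 0) ∈ S → k₁ = 0) (hc₁ : c₁ ≠ 0) {y : K} (hy : (0, y) ∈ S) :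
    (0, (y - c₂) / g) ∈ T := by
  have ha : (1 - g) * (-1 / g) ≠ 1 := by
    intro h1
    field_simp at h1
    simp at h1
  have hmem := h.mem_affinePoint hg hy ha (fun s _ hs h0 => hrow _ (h0 ▸ hs))
    (fun s hs y' _ h0 => absurd h0 (by simpa [affinePoint_zero] using ⟨hs, hc₁⟩))
  convert h.horizontal_mem (fun h0 => hrow _ (h0 ▸ hmem)) hmem using 2
  · rw [affinePoint_zero]
    field_simp
    ring
  · unfold affinePoint
    field_simp
    ring

theorem col_sub_mem (h : KickInvariant g c₁ k₁ c₂ k₂ S T) (hg : GeomSumsExhaust g)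
    (hg0 : g ≠ 0) (hrow : ∀ x, (x, 0) ∈ S → k₁ = 0) (hc₁ : c₁ ≠ 0) {y : K} (hy : (0, y) ∈ S) :
    (0, y - k₂) ∈ S := by
  convert h.vertical_mem_col (h.col_mem_right hg hg0 hrow hc₁ hy) using 2
  field_simp
  ring

theorem exists_row_mem_of_col_mem (h : KickInvariant g c₁ k₁ c₂ k₂ S T)
    (hg : GeomSumsExhaust g) (hc₁ : c₁ ≠ 0) (hc₂ : c₂ ≠ 0) {y : K} (hy : (0, y) ∈ S)
    (hfix : (1 - g) * y ≠ c₂) : ∃ w, (w, 0) ∈ S ∧ (1 - g) * w * y = c₁ * y + c₂ * w := by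
  obtain ⟨a, ha, hya, huniq⟩ := exists_affinePoint_eq_zero hc₂ hfix
  have hmem := h.mem_affinePoint hg hy ha (fun s hs _ h0 => absurd (huniq s h0) hs)
    (fun s hs y' _ h0 => absurd h0 (by simpa [affinePoint_zero] using ⟨hs, hc₁⟩))
  rw [hya, affinePoint_zero] at hmem
  refine ⟨a * c₁, hmem, ?_⟩
  unfold affinePoint at hya
  linear_combination -c₁ * hya

theorem mem_of_col_mem_of_fixed (h : KickInvariant g c₁ k₁ c₂ k₂ S T) (hg : GeomSumsExhaust g)
    (hc₁ : c₁ ≠ 0) (hc₂ : c₂ ≠ 0) {x y : K} (hy : (0, y) ∈ S) (hfix : (1 - g) * y = c₂)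
    (hx : (1 - g) * x ≠ c₁) : (x, y) ∈ S := by
  have hy0 : y ≠ 0 := fun h0 => hc₂ (by rw [← hfix, h0, mul_zero])
  have ha : (1 - g) * (x / c₁) ≠ 1 := by
    rwa [← mul_div_assoc, Ne, div_eq_one_iff_eq hc₁]
  have hmem := h.mem_affinePoint hg hy ha
    (fun s _ _ h0 => absurd h0 (by rwa [affinePoint_of_fixed hfix]))
    (fun s hs y' _ h0 => absurd h0 (by simpa [affinePoint_zero] using ⟨hs, hc₁⟩))
  rwa [affinePoint_zero, div_mul_cancel₀ x hc₁, affinePoint_of_fixed hfix] at hmem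

theorem mem_of_row_mem_right_of_fixed (h : KickInvariant g c₁ k₁ c₂ k₂ S T)
    (hg : GeomSumsExhaust g) (hg0 : g ≠ 0) (hc₁ : c₁ ≠ 0) (hc₂ : c₂ ≠ 0) {x y : K}
    (hx : (x, 0) ∈ T) (hfix : (1 - g) * x = c₁) (hy : (1 - g) * y ≠ c₂) : (x, y) ∈ S := by
  have hx0 : x ≠ 0 := fun h0 => hc₁ (by rw [← hfix, h0, mul_zero])
  have hT : (x, (y - c₂) / g) ∈ T := by
    refine h.swap.mem_of_col_mem_of_fixed hg hc₂ hc₁ hx hfix fun hy' => hy ?_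
    field_simp at hy'
    linear_combination hy'
  simpa [mul_div_cancel₀ _ hg0] using h.vertical_mem (fun h0 => absurd h0 hx0) hT

/- From the row to the column and back. Each half of the way either closes up with a bilinear
relation between its end points or starts at a fixed coordinate and sweeps out a whole line. -/
theorem row_return (h : KickInvariant g c₁ k₁ c₂ k₂ S T) (hg : GeomSumsExhaust g) (hg0 : g ≠ 0)
    (hc₁ : c₁ ≠ 0) (hc₂ : c₂ ≠ 0) {w : K} (hw : (w, 0) ∈ S) :
    (∃ x, x ≠ 0 ∧ ∀ y, (1 - g) * y ≠ c₂ → (x, y) ∈ S) ∨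
    (∃ y, y ≠ 0 ∧ ∀ x, (1 - g) * x ≠ c₁ → (x, y) ∈ S) ∨
    ∃ v w', (1 - g) * v * (g * w + c₁ - k₁) = c₂ * (g * w + c₁ - k₁) + c₁ * v ∧
      (0, g * v + c₂ - k₂) ∈ S ∧
      (1 - g) * w' * (g * v + c₂ - k₂) = c₁ * (g * v + c₂ - k₂) + c₂ * w' ∧ (w', 0) ∈ S := by
  have hx := h.horizontal_mem_row hw
  by_cases hxfix : (1 - g) * (g * w + c₁ - k₁) = c₁
  · exact Or.inl ⟨_, fun h0 => hc₁ (by rw [← hxfix, h0, mul_zero]),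
      fun y => h.mem_of_row_mem_right_of_fixed hg hg0 hc₁ hc₂ hx hxfix⟩
  obtain ⟨v, hv, hxv⟩ := h.swap.exists_row_mem_of_col_mem hg hc₂ hc₁ hx hxfix
  have hy : (0, g * v + c₂ - k₂) ∈ S := h.vertical_mem_col hv
  by_cases hyfix : (1 - g) * (g * v + c₂ - k₂) = c₂
  · exact Or.inr (Or.inl ⟨_, fun h0 => hc₂ (by rw [← hyfix, h0, mul_zero]),
      fun x => h.mem_of_col_mem_of_fixed hg hc₁ hc₂ hy hyfix⟩)
  · obtain ⟨w', hw', hyw⟩ := h.exists_row_mem_of_col_mem hg hc₁ hc₂ hy hyfix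
    exact Or.inr (Or.inr ⟨v, w', hxv, hy, hyw, hw'⟩)

end KickInvariant

end KickedFlow

section PrimeField

open Set

variable {p : ℕ} [Fact p.Prime] {g c₁ k₁ c₂ k₂ : ZMod p} {S T : Set (ZMod p × ZMod p)}

theorem forall_of_forall_add {P : ZMod p → Prop} {a s : ZMod p} (hs : s ≠ 0) (ha : P a)
    (hadd : ∀ x, P x → P (x + s)) (b : ZMod p) : P b := by
  have hP (n : ℕ) : P (a + n * s) := by
    induction n with
    | zero => simpa using ha
    | succ n ih =>
      convert hadd _ ih using 1
      push_cast
      ring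
  convert hP ((b - a) / s).val using 1
  rw [ZMod.natCast_val, ZMod.cast_id, div_mul_cancel₀ _ hs, add_sub_cancel]

theorem geomSumsExhaust_one : GeomSumsExhaust (1 : ZMod p) :=
  fun s _ => ⟨s.val, by simp⟩

namespace KickInvariant

theorem col_mem (h : KickInvariant g c₁ k₁ c₂ k₂ S T) (hg : GeomSumsExhaust g) (hg0 : g ≠ 0)
    (hrow : ∀ x, (x, 0) ∈ S → k₁ = 0) (hc₁ : c₁ ≠ 0) (hk₂ : k₂ ≠ 0) {y₀ : ZMod p}
    (hy₀ : (0, y₀) ∈ S) (y : ZMod p) : (0, y) ∈ S :=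
  forall_of_forall_add (P := fun y => (0, y) ∈ S) (neg_ne_zero.2 hk₂) hy₀
    (fun w hw => by simpa only [sub_eq_add_neg] using h.col_sub_mem hg hg0 hrow hc₁ hw) y

theorem exists_mem_row (h : KickInvariant g c₁ k₁ c₂ k₂ S T) (hg : GeomSumsExhaust g)
    (hg0 : g ≠ 0) (hc₁ : c₁ ≠ 0) (hc₂ : c₂ ≠ 0) (hk₂ : k₂ ≠ 0) {x y : ZMod p}
    (hxy : (x, y) ∈ S) (hfix : ¬((1 - g) * x = c₁ ∧ (1 - g) * y = c₂)) : ∃ w, (w, 0) ∈ S := by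
  by_contra! hS
  have hrow (x : ZMod p) (hx : (x, 0) ∈ S) : k₁ = 0 := absurd hx (hS x)
  by_cases hx : (1 - g) * x = c₁
  · have hx0 : x ≠ 0 := fun h0 => hc₁ (by rw [← hx, h0, mul_zero])
    obtain ⟨a, ha, hya, -⟩ := exists_affinePoint_eq_zero hc₂ fun hy => hfix ⟨hx, hy⟩
    have hmem := h.mem_affinePoint hg hxy ha (fun s _ hs h0 => hrow _ (h0 ▸ hs))
      (fun s _ y' _ h0 => absurd h0 (by rwa [affinePoint_of_fixed hx]))
    exact hS _ (hya ▸ hmem)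
  · obtain ⟨y', hy'⟩ := h.exists_mem_col hg hrow hc₁ hxy hx
    exact hS _ (h.col_mem hg hg0 hrow hc₁ hk₂ hy' 0)

end KickInvariant

end PrimeField

section PureShift

open Set

variable {p : ℕ} [Fact p.Prime] {ν c₁ c₂ : ZMod p} {S T : Set (ZMod p × ZMod p)}

namespace KickInvariant

theorem row_add_mem_of_ne_zero (h : KickInvariant 1 c₁ (ν * c₂) c₂ c₁ S T) (hc₁ : c₁ ≠ 0)
    (hc₂ : c₂ ≠ 0) {w : ZMod p} (hw : (w, 0) ∈ S) :
    (w + (c₁ ^ 2 - ν * c₂ ^ 2) / c₂, 0) ∈ S := by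
  have hT := h.horizontal_mem_row hw
  obtain ⟨v, hv, hwv⟩ := h.swap.exists_row_mem_of_col_mem geomSumsExhaust_one hc₂ hc₁ hT
    (by simpa using hc₁.symm)
  obtain ⟨w', hw', hvw⟩ := h.exists_row_mem_of_col_mem geomSumsExhaust_one hc₁ hc₂
    (h.vertical_mem_col hv) (by simpa using hc₂.symm)
  convert hw' using 2
  field_simp
  linear_combination hvw - hwv

theorem zero_mem_of_pure_shift (h : KickInvariant 1 c₁ (ν * c₂) c₂ c₁ S T) (hν : ¬ IsSquare ν)
    (hc : ¬(c₁ = 0 ∧ c₂ = 0)) (hS : S.Nonempty) : (0, 0) ∈ S := by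
  obtain ⟨⟨x, y⟩, hxy⟩ := hS
  have hν0 : ν ≠ 0 := fun h0 => hν (h0 ▸ IsSquare.zero)
  by_cases hc₂ : c₂ = 0
  · have hc₁ : c₁ ≠ 0 := fun h0 => hc ⟨h0, hc₂⟩
    have hrow (x : ZMod p) (_ : (x, 0) ∈ S) : ν * c₂ = 0 := by rw [hc₂, mul_zero]
    obtain ⟨y', hy'⟩ := h.exists_mem_col geomSumsExhaust_one hrow hc₁ hxy (by simpa using hc₁.symm)
    exact h.col_mem geomSumsExhaust_one one_ne_zero hrow hc₁ hc₁ hy' 0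
  by_cases hc₁ : c₁ = 0
  · have hrow (x : ZMod p) (_ : (x, 0) ∈ Prod.swap ⁻¹' T) : c₁ = 0 := hc₁
    obtain ⟨y', hy'⟩ := h.swap.exists_mem_col geomSumsExhaust_one hrow hc₂
      (h.horizontal hxy) (by simpa using Ne.symm hc₂)
    have hT := h.swap.col_mem geomSumsExhaust_one one_ne_zero hrow hc₂ (mul_ne_zero hν0 hc₂) hy' c₁
    simpa using h.swap.col_mem_right geomSumsExhaust_one one_ne_zero hrow hc₂ hT
  · obtain ⟨w, hw⟩ := h.exists_mem_row geomSumsExhaust_one one_ne_zero hc₁ hc₂ hc₁ hxy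
      (by simpa using fun h0 => absurd h0.symm hc₁)
    refine forall_of_forall_add (P := fun w => (w, 0) ∈ S) (div_ne_zero (fun h0 => hν ?_) hc₂) hw
      (fun w hw => h.row_add_mem_of_ne_zero hc₁ hc₂ hw) 0
    refine ⟨c₁ / c₂, ?_⟩
    field_simp
    linear_combination -h0

theorem eq_univ_of_pure_shift (h : KickInvariant 1 c₁ (ν * c₂) c₂ c₁ S T) (hν : ¬ IsSquare ν)
    (hc : ¬(c₁ = 0 ∧ c₂ = 0)) (hS : S.Nonempty) : S = univ := by
  by_contra hne
  exact (h.compl one_ne_zero).zero_mem_of_pure_shift hν hc (nonempty_compl.2 hne)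
    (h.zero_mem_of_pure_shift hν hc hS)

end KickInvariant

end PureShift

section NewColors

open Set

theorem isSquare_mul_of_not_isSquare {F : Type*} [Field F] [Finite F] {a b : F}
    (ha : ¬ IsSquare a) (hb : ¬ IsSquare b) : IsSquare (a * b) := by
  classical
  cases nonempty_fintype F
  by_cases hab : a * b = 0
  · exact hab ▸ IsSquare.zero
  · rw [← quadraticChar_one_iff_isSquare hab, map_mul,
      quadraticChar_neg_one_iff_not_isSquare.2 ha, quadraticChar_neg_one_iff_not_isSquare.2 hb,
      neg_one_mul, neg_neg]

/-- The vertices whose transversal edge receives the second of the two new colors, the other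
vertices receiving the first. The vertex `(0, 1)`, whose transversal edge keeps its old color, is
put into this class arbitrarily. -/
def recolorClass {K : Type*} [Field K] (g : K) : Set (K × K) :=
  {z | (z.1 = 0 ∧ z.2 ≠ 0) ∨ z = (1, 0) ∨ z.1 * z.2 = 1 ∨ z.1 * z.2 = g}

/-- A set of left vertices is mixed if the transversal edges at its points do not all receive the
same new color, because the exceptional vertex `(0, 1)` or both classes are represented. -/
def IsMixed {K : Type*} [Field K] (g : K) (L : Set (K × K)) : Prop :=
  (0, 1) ∈ L ∨ (∃ z ∈ L, z ∈ recolorClass g) ∧ ∃ z ∈ L, z ∉ recolorClass g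

section Field

variable {K : Type*} [Field K] {g x y : K} {L : Set (K × K)}

theorem mem_or_notMem_of_not_isMixed (hL : ¬ IsMixed g L) :
    (∀ z ∈ L, z ∈ recolorClass g) ∨ ∀ z ∈ L, z ∉ recolorClass g := by
  rw [IsMixed] at hL
  grind

theorem mem_recolorClass_row : (x, 0) ∈ recolorClass g ↔ x = 1 ∨ g = 0 := by
  simp [recolorClass, eq_comm (a := g)]

theorem mem_recolorClass_col (hg : g ≠ 0) : (0, y) ∈ recolorClass g ↔ y ≠ 0 := by
  simp [recolorClass, hg.symm]

theorem mem_recolorClass_of_ne_zero (hx : x ≠ 0) (hy : y ≠ 0) :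
    (x, y) ∈ recolorClass g ↔ x * y = 1 ∨ x * y = g := by
  simp [recolorClass, hx, hy]

theorem exists_sq_mul_eq_one_or [Finite K] (hg : ¬ IsSquare g) {u : K}
    (hu : u ≠ 0) : ∃ s, s ≠ 0 ∧ (s ^ 2 * u = 1 ∨ s ^ 2 * u = g) := by
  have hg0 : g ≠ 0 := fun h0 => hg (h0 ▸ IsSquare.zero)
  by_cases hsq : IsSquare u
  · obtain ⟨t, rfl⟩ := hsq
    have ht : t ≠ 0 := left_ne_zero_of_mul hu
    exact ⟨t⁻¹, inv_ne_zero ht, Or.inl (by field_simp)⟩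
  · obtain ⟨t, ht⟩ := isSquare_mul_of_not_isSquare hg hsq
    have ht0 : t ≠ 0 := left_ne_zero_of_mul (ht ▸ mul_ne_zero hg0 hu)
    refine ⟨g / t, div_ne_zero hg0 ht0, Or.inr ?_⟩
    field_simp
    linear_combination ht

theorem exists_sq_mul_ne_one_and_ne (h2 : (2 : K) ≠ 0) (h3 : (3 : K) ≠ 0) (hg : ¬ IsSquare g)
    (u : K) : ∃ s, s ≠ 0 ∧ ¬(s ^ 2 * u = 1 ∨ s ^ 2 * u = g) := by
  by_cases hu : u = 1 ∨ u = g
  · refine ⟨2, h2, ?_⟩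
    rcases hu with rfl | rfl
    · rintro (h | h)
      · exact h3 (by linear_combination h)
      · exact hg ⟨2, by linear_combination -h⟩
    · rintro (h | h)
      · exact hg ⟨2⁻¹, by field_simp; linear_combination h⟩
      · have hu : u = 0 := (mul_eq_zero.1 (by linear_combination h : 3 * u = 0)).resolve_left h3
        exact hg (hu ▸ IsSquare.zero)
  · exact ⟨1, one_ne_zero, by simpa using hu⟩

theorem isMixed_of_mul_mem [Finite K] (h2 : (2 : K) ≠ 0) (h3 : (3 : K) ≠ 0)
    (hg : ¬ IsSquare g) (hxy : (x, y) ≠ 0) (hL : ∀ s, s ≠ 0 → (s * x, s * y) ∈ L) :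
    IsMixed g L := by
  have hg0 : g ≠ 0 := fun h0 => hg (h0 ▸ IsSquare.zero)
  by_cases hx : x = 0
  · have hy : y ≠ 0 := fun hy => hxy (by rw [hx, hy]; rfl)
    exact Or.inl (by simpa [hx, hy] using hL y⁻¹ (inv_ne_zero hy))
  by_cases hy : y = 0
  · refine Or.inr ⟨⟨_, hL x⁻¹ (inv_ne_zero hx), ?_⟩, _, hL (-x⁻¹) (by simpa using hx), ?_⟩
    · simp [hx, hy, mem_recolorClass_row]
    · rw [hy, mul_zero, mem_recolorClass_row, neg_mul, inv_mul_cancel₀ hx]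
      rintro (h | h)
      · exact h2 (by linear_combination -h)
      · exact hg0 h
  have hmem {s : K} (hs : s ≠ 0) : (s * x, s * y) ∈ recolorClass g ↔
      s ^ 2 * (x * y) = 1 ∨ s ^ 2 * (x * y) = g := by
    rw [mem_recolorClass_of_ne_zero (mul_ne_zero hs hx) (mul_ne_zero hs hy),
      mul_mul_mul_comm, ← sq]
  obtain ⟨s, hs, hsB⟩ := exists_sq_mul_eq_one_or hg (mul_ne_zero hx hy)
  obtain ⟨t, ht, htB⟩ := exists_sq_mul_ne_one_and_ne h2 h3 hg (x * y)
  exact Or.inr ⟨⟨_, hL s hs, (hmem hs).2 hsB⟩, _, hL t ht, mt (hmem ht).1 htB⟩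

theorem exists_mul_eq_one_or (hg0 : g ≠ 0) (hg1 : g ≠ 1) (hy : y ≠ 0) (x₀ : K) :
    ∃ x, x ≠ 0 ∧ x ≠ x₀ ∧ (x * y = 1 ∨ x * y = g) := by
  by_cases h : y⁻¹ = x₀
  · refine ⟨g * y⁻¹, mul_ne_zero hg0 (inv_ne_zero hy), fun h' => hg1 ?_, Or.inr (by field_simp)⟩
    exact mul_right_cancel₀ (inv_ne_zero hy) (by rw [h', one_mul, h])
  · exact ⟨y⁻¹, inv_ne_zero hy, h, Or.inl (inv_mul_cancel₀ hy)⟩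

theorem exists_mul_ne_one_and_ne [Fintype K] (hK : 4 < Fintype.card K) (hy : y ≠ 0) (g x₀ : K) :
    ∃ x, x ≠ 0 ∧ x ≠ x₀ ∧ ¬(x * y = 1 ∨ x * y = g) := by
  classical
  obtain ⟨x, -, hx⟩ := Finset.exists_mem_notMem_of_card_lt_card
    (s := {0, x₀, y⁻¹, g * y⁻¹}) (t := Finset.univ) (Finset.card_le_four.trans_lt hK)
  simp only [Finset.mem_insert, Finset.mem_singleton, not_or] at hx
  refine ⟨x, hx.1, hx.2.1, ?_⟩
  rw [← eq_div_iff hy, ← eq_div_iff hy, one_div, div_eq_mul_inv]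
  exact not_or.2 hx.2.2

theorem isMixed_of_row [Fintype K] (hK : 4 < Fintype.card K) (hg0 : g ≠ 0) (hg1 : g ≠ 1)
    (hy : y ≠ 0) (x₀ : K) (hL : ∀ x, x ≠ 0 → x ≠ x₀ → (x, y) ∈ L) : IsMixed g L := by
  obtain ⟨x, hx, hx₀, hxB⟩ := exists_mul_eq_one_or hg0 hg1 hy x₀
  obtain ⟨x', hx', hx'₀, hx'B⟩ := exists_mul_ne_one_and_ne hK hy g x₀
  exact Or.inr ⟨⟨_, hL x hx hx₀, (mem_recolorClass_of_ne_zero hx hy).2 hxB⟩,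
    _, hL x' hx' hx'₀, mt (mem_recolorClass_of_ne_zero hx' hy).1 hx'B⟩

theorem isMixed_of_col [Fintype K] (hK : 4 < Fintype.card K) (hg0 : g ≠ 0) (hg1 : g ≠ 1)
    (hx : x ≠ 0) (y₀ : K) (hL : ∀ y, y ≠ 0 → y ≠ y₀ → (x, y) ∈ L) : IsMixed g L := by
  obtain ⟨y, hy, hy₀, hyB⟩ := exists_mul_eq_one_or hg0 hg1 hx y₀
  obtain ⟨y', hy', hy'₀, hy'B⟩ := exists_mul_ne_one_and_ne hK hx g y₀
  rw [mul_comm] at hyB hy'B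
  exact Or.inr ⟨⟨_, hL y hy hy₀, (mem_recolorClass_of_ne_zero hx hy).2 hyB⟩,
    _, hL y' hy' hy'₀, mt (mem_recolorClass_of_ne_zero hx hy').1 hy'B⟩

theorem isMixed_of_row_zero (hg0 : g ≠ 0) (hL : ∀ x, (x, 0) ∈ L) : IsMixed g L :=
  Or.inr ⟨⟨_, hL 1, mem_recolorClass_row.2 (Or.inl rfl)⟩,
    _, hL 0, fun h => (mem_recolorClass_col hg0).1 h rfl⟩

end Field

end NewColors

section NewAgainstOld

open Set

variable {p : ℕ} [Fact p.Prime] {g f₁ f₂ ν : ZMod p} {S T : Set (ZMod p × ZMod p)}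

/- With `a = w - f₁` and `b = v - f₂` the relations become `b * (g * a - k₁) = f₁ * f₂` and
`a * (g * b - k₂) = f₁ * f₂`, so that `b / f₁ = a / (ν * f₂)` solves the excluded equation. -/
theorem no_closed_return (hg1 : g ≠ 1) (hf₁ : f₁ ≠ 0) (hf₂ : f₂ ≠ 0)
    (hν : ∀ t, ν * (g * t ^ 2 - (1 - g) * t) ≠ 1) {v w : ZMod p}
    (hwv : (1 - g) * v * (g * w + (1 - g) * f₁ - ν * ((1 - g) * f₂)) =
      (1 - g) * f₂ * (g * w + (1 - g) * f₁ - ν * ((1 - g) * f₂)) + (1 - g) * f₁ * v)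
    (hvw : (1 - g) * w * (g * v + (1 - g) * f₂ - (1 - g) * f₁) =
      (1 - g) * f₁ * (g * v + (1 - g) * f₂ - (1 - g) * f₁) + (1 - g) * f₂ * w) : False := by
  have hd : 1 - g ≠ 0 := sub_ne_zero.2 hg1.symm
  have hwv' : (v - f₂) * (g * (w - f₁) - ν * ((1 - g) * f₂)) = f₁ * f₂ :=
    mul_left_cancel₀ hd (by linear_combination hwv)
  have hvw' : (w - f₁) * (g * (v - f₂) - (1 - g) * f₁) = f₁ * f₂ :=
    mul_left_cancel₀ hd (by linear_combination hvw)
  have hab : f₁ * (w - f₁) = ν * f₂ * (v - f₂) :=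
    mul_left_cancel₀ hd (by linear_combination hwv' - hvw')
  refine hν ((v - f₂) / f₁) ?_
  field_simp
  refine mul_left_cancel₀ hf₂ ?_
  linear_combination f₁ * hvw' - (g * (v - f₂) - (1 - g) * f₁) * hab

namespace KickInvariant

theorem isMixed_of_fst_eq_zero (hp : 5 ≤ p)
    (h : KickInvariant g ((1 - g) * 0) (ν * ((1 - g) * f₂)) ((1 - g) * f₂) ((1 - g) * 0) S T)
    (hg : GeomSumsExhaust g) (hgs : ¬ IsSquare g) (hν : ν ≠ 0) (hS : S.Nonempty)
    (hf : (0, f₂) ∉ S) : IsMixed g S := by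
  have hg0 : g ≠ 0 := fun h0 => hgs (h0 ▸ IsSquare.zero)
  have hg1 : g ≠ 1 := fun h1 => hgs (h1 ▸ IsSquare.one)
  obtain ⟨⟨x, y⟩, hxy⟩ := hS
  have hne : ¬(x = 0 ∧ y = f₂) := by
    rintro ⟨rfl, rfl⟩
    exact hf hxy
  by_cases hf₂ : f₂ = 0
  · subst hf₂
    have h2 : ((2 : ℕ) : ZMod p) ≠ 0 :=
      CharP.cast_ne_zero_of_ne_of_prime _ Nat.prime_two (by omega : p ≠ 2)
    have h3 : ((3 : ℕ) : ZMod p) ≠ 0 :=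
      CharP.cast_ne_zero_of_ne_of_prime _ Nat.prime_three (by omega : p ≠ 3)
    refine isMixed_of_mul_mem (mod_cast h2) (mod_cast h3) hgs (x := x) (y := y)
      (by simpa using hne) fun t ht => ?_
    simpa using h.mem_dilation hg hg1 hxy (by simp) (by simp) ht
  by_cases hy : y = f₂
  · subst hy
    have hx : x ≠ 0 := fun hx => hne ⟨hx, rfl⟩
    refine isMixed_of_row (by rwa [ZMod.card]) hg0 hg1 hf₂ 0 fun x' hx' _ => ?_
    simpa [hx] using h.mem_dilation hg hg1 hxy (by simp [hf₂]) (by simp) (div_ne_zero hx' hx)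
  · have hc₂ : (1 - g) * f₂ ≠ 0 := mul_ne_zero (sub_ne_zero.2 hg1.symm) hf₂
    have hcol (v : ZMod p) (_ : (v, 0) ∈ Prod.swap ⁻¹' T) : (1 - g) * 0 = 0 := mul_zero _
    obtain ⟨x', hx'⟩ := h.swap.exists_mem_col hg hcol hc₂ (h.horizontal hxy)
      (mt (mul_left_cancel₀ (sub_ne_zero.2 hg1.symm)) hy)
    refine isMixed_of_row_zero hg0 fun x => ?_
    have hT := h.swap.col_mem hg hg0 hcol hc₂ (mul_ne_zero hν hc₂) hx' (g * x)
    simpa [hg0] using h.swap.col_mem_right hg hg0 hcol hc₂ hT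

theorem isMixed_of_snd_eq_zero (hp : 5 ≤ p)
    (h : KickInvariant g ((1 - g) * f₁) (ν * ((1 - g) * 0)) ((1 - g) * 0) ((1 - g) * f₁) S T)
    (hg : GeomSumsExhaust g) (hg0 : g ≠ 0) (hg1 : g ≠ 1) (hf₁ : f₁ ≠ 0)
    (hS : S.Nonempty) (hf : (f₁, 0) ∉ S) : IsMixed g S := by
  obtain ⟨⟨x, y⟩, hxy⟩ := hS
  by_cases hx : x = f₁
  · subst hx
    have hy : y ≠ 0 := by
      rintro rfl
      exact hf hxy
    refine isMixed_of_col (by rwa [ZMod.card]) hg0 hg1 hf₁ 0 fun y' hy' _ => ?_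
    simpa [hy] using h.mem_dilation hg hg1 hxy (by simp) (by simp [hf₁]) (div_ne_zero hy' hy)
  · have hc₁ : (1 - g) * f₁ ≠ 0 := mul_ne_zero (sub_ne_zero.2 hg1.symm) hf₁
    have hrow (w : ZMod p) (_ : (w, 0) ∈ S) : ν * ((1 - g) * 0) = 0 := by simp
    obtain ⟨y', hy'⟩ := h.exists_mem_col hg hrow hc₁ hxy
      (mt (mul_left_cancel₀ (sub_ne_zero.2 hg1.symm)) hx)
    exact Or.inl (h.col_mem hg hg0 hrow hc₁ hc₁ hy' 1)

theorem isMixed_of_ne_zero (hp : 5 ≤ p)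
    (h : KickInvariant g ((1 - g) * f₁) (ν * ((1 - g) * f₂)) ((1 - g) * f₂) ((1 - g) * f₁) S T)
    (hg : GeomSumsExhaust g) (hg0 : g ≠ 0) (hg1 : g ≠ 1)
    (hν : ∀ t, ν * (g * t ^ 2 - (1 - g) * t) ≠ 1) (hf₁ : f₁ ≠ 0) (hf₂ : f₂ ≠ 0)
    (hS : S.Nonempty) (hf : (f₁, f₂) ∉ S) : IsMixed g S := by
  by_contra hmix
  have hd : 1 - g ≠ 0 := sub_ne_zero.2 hg1.symm
  have hc₁ : (1 - g) * f₁ ≠ 0 := mul_ne_zero hd hf₁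
  have hc₂ : (1 - g) * f₂ ≠ 0 := mul_ne_zero hd hf₂
  have hreturn {w : ZMod p} (hw : (w, 0) ∈ S) := by
    refine ((h.row_return hg hg0 hc₁ hc₂ hw).resolve_left ?_).resolve_left ?_
    · rintro ⟨x, hx, hL⟩
      exact hmix (isMixed_of_col (by rwa [ZMod.card]) hg0 hg1 hx f₂
        fun y _ hy => hL y (mt (mul_left_cancel₀ hd) hy))
    · rintro ⟨y, hy, hL⟩
      exact hmix (isMixed_of_row (by rwa [ZMod.card]) hg0 hg1 hy f₁
        fun x _ hx => hL x (mt (mul_left_cancel₀ hd) hx))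
  obtain ⟨⟨x, y⟩, hxy⟩ := hS
  obtain ⟨w₀, hw₀⟩ := h.exists_mem_row hg hg0 hc₁ hc₂ hc₁ hxy fun hfix => hf (by
    rwa [← mul_left_cancel₀ hd hfix.1, ← mul_left_cancel₀ hd hfix.2])
  obtain ⟨v₀, w₁, hwv₀, hy₀, hvw₀, hw₁⟩ := hreturn hw₀
  rcases mem_or_notMem_of_not_isMixed hmix with hB | hB
  · have hw {w : ZMod p} (hw : (w, 0) ∈ S) : w = 1 :=
      (mem_recolorClass_row.1 (hB _ hw)).resolve_right hg0
    rw [(hw hw₁).trans (hw hw₀).symm] at hvw₀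
    exact no_closed_return hg1 hf₁ hf₂ hν hwv₀ hvw₀
  · have hy {y : ZMod p} (hy : (0, y) ∈ S) : y = 0 :=
      not_not.1 (mt (mem_recolorClass_col hg0).2 (hB _ hy))
    obtain ⟨v₁, -, hwv₁, hy₁, -, -⟩ := hreturn hw₁
    have hv : v₁ = v₀ := mul_left_cancel₀ hg0 (by linear_combination hy hy₁ - hy hy₀)
    rw [hv] at hwv₁
    exact no_closed_return hg1 hf₁ hf₂ hν hwv₁ hvw₀

theorem isMixed (hp : 5 ≤ p)
    (h : KickInvariant g ((1 - g) * f₁) (ν * ((1 - g) * f₂)) ((1 - g) * f₂) ((1 - g) * f₁) S T)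
    (hg : GeomSumsExhaust g) (hgs : ¬ IsSquare g) (hνs : ¬ IsSquare ν)
    (hν : ∀ t, ν * (g * t ^ 2 - (1 - g) * t) ≠ 1) (hS : S.Nonempty) (hf : (f₁, f₂) ∉ S) :
    IsMixed g S := by
  have hg0 : g ≠ 0 := fun h0 => hgs (h0 ▸ IsSquare.zero)
  have hg1 : g ≠ 1 := fun h1 => hgs (h1 ▸ IsSquare.one)
  have hν0 : ν ≠ 0 := fun h0 => hνs (h0 ▸ IsSquare.zero)
  rcases eq_or_ne f₁ 0 with rfl | hf₁
  · exact h.isMixed_of_fst_eq_zero hp hg hgs hν0 hS hf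
  rcases eq_or_ne f₂ 0 with rfl | hf₂
  · exact h.isMixed_of_snd_eq_zero hp hg hg0 hg1 hf₁ hS hf
  · exact h.isMixed_of_ne_zero hp hg hg0 hg1 hν hf₁ hf₂ hS hf

end KickInvariant

end NewAgainstOld

section BaseColoring

variable {K : Type*} [Field K] [DecidableEq K] {g ν : K} {a a' b b' c c' : K × K}
  {A : Set (K × K)}

/-- The color of the edge between `a` and `b` before any recoloring: for `ν ≠ 1`, the solution
`c` of `c.1 = a.1 - b.1 + [b.2 = 0] * ν * c.2` and `c.2 = a.2 - b.2 + [a.1 = 0] * c.1`, that is, the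
difference `a - b` up to a correction on the two axes. -/
def baseColor (ν : K) (a b : K × K) : K × K :=
  let d := a - b
  if a.1 = 0 ∧ b.2 = 0 then ((d.1 + ν * d.2) / (1 - ν), (d.1 + d.2) / (1 - ν))
  else (d.1 + if b.2 = 0 then ν * d.2 else 0, d.2 + if a.1 = 0 then d.1 else 0)

theorem baseColor_eq_iff (hν : ν ≠ 1) : baseColor ν a b = c ↔
    c.1 = a.1 - b.1 + (if b.2 = 0 then ν * c.2 else 0) ∧
      c.2 = a.2 - b.2 + if a.1 = 0 then c.1 else 0 := by
  have hν' : 1 - ν ≠ 0 := sub_ne_zero.2 hν.symm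
  by_cases ha : a.1 = 0 <;> by_cases hb : b.2 = 0 <;>
    simp only [baseColor, ha, hb, Prod.ext_iff, Prod.fst_sub, Prod.snd_sub, if_true, if_false,
      and_true, and_false, and_self, add_zero]
  · rw [div_eq_iff hν', div_eq_iff hν']
    constructor <;> rintro ⟨h₁, h₂⟩ <;> constructor
    · refine mul_right_cancel₀ hν' ?_
      linear_combination ν * h₂ - h₁
    · refine mul_right_cancel₀ hν' ?_
      linear_combination h₁ - h₂
    · linear_combination -h₁ - ν * h₂
    · linear_combination -h₁ - h₂
  · constructor <;> rintro ⟨h₁, h₂⟩ <;> constructor <;> grind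
  · constructor <;> rintro ⟨h₁, h₂⟩ <;> constructor <;> grind
  · constructor <;> rintro ⟨h₁, h₂⟩ <;> constructor <;> grind

theorem baseColor_row_injective (hν : ν ≠ 1) (a : K × K) : Function.Injective (baseColor ν a) := by
  intro b b' h
  obtain ⟨h₁, h₂⟩ := (baseColor_eq_iff hν).1 h
  obtain ⟨h₁', h₂'⟩ := (baseColor_eq_iff hν).1 rfl
  have hb : b.2 = b'.2 := by linear_combination h₂ - h₂'
  refine Prod.ext ?_ hb
  rw [hb] at h₁
  linear_combination h₁ - h₁'

theorem baseColor_col_injective (hν : ν ≠ 1) (b : K × K) :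
    Function.Injective (baseColor ν · b) := by
  intro a a' h
  obtain ⟨h₁, h₂⟩ := (baseColor_eq_iff hν).1 (h : baseColor ν a b = baseColor ν a' b)
  obtain ⟨h₁', h₂'⟩ := (baseColor_eq_iff hν).1 (rfl : baseColor ν a' b = _)
  have ha : a.1 = a'.1 := by linear_combination h₁' - h₁
  refine Prod.ext ha ?_
  rw [ha] at h₂
  linear_combination h₂' - h₂

theorem baseColor_smul_right (hν : ν ≠ 1) (hg : g ≠ 0) (a : K × K) :
    baseColor ν a (g • a) = (1 - g) • a := by
  rw [baseColor_eq_iff hν]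
  simp only [Prod.smul_fst, Prod.smul_snd, smul_eq_mul, mul_eq_zero, hg, false_or]
  grind

/- Going from an edge of color `c` over the right vertex `b` to one of color `c'` moves the first
coordinate of the left vertex, going back over the left vertex moves the second coordinate of the
right one, so the pairs `(a.1, b.2)` perform a kicked flow. -/
theorem Alternates.kickInvariant (hν : ν ≠ 1) (h : Alternates (baseColor ν) c c' A) :
    KickInvariant 1 (c' - c).1 (ν * (c' - c).2) (c' - c).2 (c' - c).1
      {z | ∃ a ∈ A, ∃ b, baseColor ν a b = c ∧ (a.1, b.2) = z}
      {z | ∃ a ∈ A, ∃ b, baseColor ν a b = c' ∧ (a.1, b.2) = z} where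
  horizontal := by
    rintro _ ⟨a, ha, b, hab, rfl⟩
    obtain ⟨b', hab', a', ha', hc'⟩ := h a ha
    obtain rfl : b' = b := baseColor_row_injective hν a (hab'.trans hab.symm)
    refine ⟨a', ha', b', hc', Prod.ext ?_ rfl⟩
    obtain ⟨h₁, -⟩ := (baseColor_eq_iff hν).1 hab
    obtain ⟨h₁', -⟩ := (baseColor_eq_iff hν).1 hc'
    simp only [kick, Prod.fst_sub, Prod.snd_sub]
    grind
  vertical := by
    rintro ⟨y, x⟩ ⟨a, ha, b, hab, h_eq⟩
    obtain ⟨rfl, rfl⟩ := Prod.mk.inj h_eq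
    obtain ⟨b', hab', -⟩ := h a ha
    refine ⟨a, ha, b', hab', Prod.ext rfl ?_⟩
    obtain ⟨-, h₂⟩ := (baseColor_eq_iff hν).1 hab
    obtain ⟨-, h₂'⟩ := (baseColor_eq_iff hν).1 hab'
    simp only [kick, Prod.fst_sub, Prod.snd_sub, Prod.swap]
    grind

theorem kickInvariant_of_forall_exists_baseColor_eq (hν : ν ≠ 1) (hg : g ≠ 0)
    (h : ∀ a ∈ A, ∃ a' ∈ A, baseColor ν a' (g • a) = c) :
    KickInvariant g c.1 (ν * c.2) c.2 c.1 A (kick g c.1 (ν * c.2) '' A) where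
  horizontal := Set.mapsTo_image _ _
  vertical := by
    rintro ⟨y, x⟩ ⟨a, ha, h_eq⟩
    obtain ⟨rfl, rfl⟩ := Prod.mk.inj h_eq
    obtain ⟨a', ha', hc⟩ := h a ha
    obtain ⟨h₁, h₂⟩ := (baseColor_eq_iff hν).1 hc
    simp only [Prod.smul_fst, Prod.smul_snd, smul_eq_mul, mul_eq_zero, hg, false_or] at h₁ h₂
    have ha'₁ : a'.1 = g * a.1 + c.1 - if a.2 = 0 then ν * c.2 else 0 := by linear_combination -h₁
    have ha'₂ : a'.2 = g * a.2 + c.2 - if a'.1 = 0 then c.1 else 0 := by linear_combination -h₂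
    simp only [kick, Set.mem_preimage, Prod.swap]
    rwa [← ha'₁, ← ha'₂]

end BaseColoring

section RecoloredArray

open Classical in
/-- The edge coloring obtained from `baseColor` by giving a new color to the transversal edges
`{a, g • a}`, except to the one at `a = (0, 1)`. -/
noncomputable def recoloredArray {K : Type*} [Field K] [DecidableEq K] (g ν : K) (a b : K × K) :
    (K × K) ⊕ Bool :=
  if b = g • a ∧ a ≠ (0, 1) then Sum.inr (decide (a ∈ recolorClass g))
  else Sum.inl (baseColor ν a b)

section Field

variable {K : Type*} [Field K] [DecidableEq K] {g ν : K} {a b c : K × K} {A : Set (K × K)}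

theorem recoloredArray_eq_inl_iff : recoloredArray g ν a b = Sum.inl c ↔
    baseColor ν a b = c ∧ (b = g • a → a = (0, 1)) := by
  rw [recoloredArray]
  split_ifs with h
  · simp [h]
  · simp only [Sum.inl.injEq]
    refine ⟨fun hc => ⟨?_, by tauto⟩, fun hc => ?_⟩
    · convert hc
    · convert hc.1

theorem recoloredArray_eq_inr_iff {β : Bool} : recoloredArray g ν a b = Sum.inr β ↔
    (b = g • a ∧ a ≠ (0, 1)) ∧ (a ∈ recolorClass g ↔ β = true) := by
  rw [recoloredArray]
  split_ifs with h
  · rw [Sum.inr.injEq, and_iff_right h]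
    cases β <;> simp
  · simp [h]

theorem recoloredArray_row_injective (hν : ν ≠ 1) (a : K × K) :
    Function.Injective (recoloredArray g ν a) := by
  intro b b' h
  rcases hb : recoloredArray g ν a b' with c | β <;> rw [hb] at h
  · rw [recoloredArray_eq_inl_iff] at h hb
    exact baseColor_row_injective hν a (h.1.trans hb.1.symm)
  · rw [recoloredArray_eq_inr_iff] at h hb
    exact h.1.1.trans hb.1.1.symm

theorem recoloredArray_col_injective (hν : ν ≠ 1) (hg : g ≠ 0) (b : K × K) :
    Function.Injective (recoloredArray g ν · b) := by
  intro a a' h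
  rcases ha : recoloredArray g ν a' b with c | β <;> simp only [ha] at h
  · rw [recoloredArray_eq_inl_iff] at h ha
    exact baseColor_col_injective hν b (h.1.trans ha.1.symm)
  · rw [recoloredArray_eq_inr_iff] at h ha
    exact smul_right_injective (K × K) hg (h.1.1.symm.trans ha.1.1)

theorem Alternates.baseColor_of_recoloredArray
    (h : Alternates (recoloredArray g ν) (Sum.inl c) (Sum.inl c') A) :
    Alternates (baseColor ν) c c' A := by
  intro a ha
  obtain ⟨b, hc, a', ha', hc'⟩ := h a ha
  exact ⟨b, (recoloredArray_eq_inl_iff.1 hc).1, a', ha', (recoloredArray_eq_inl_iff.1 hc').1⟩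

theorem Alternates.eq_of_inr_inr {β β' : Bool} (hA : A.Nonempty) (hg : g ≠ 0)
    (h : Alternates (recoloredArray g ν) (Sum.inr β) (Sum.inr β') A) : β = β' := by
  obtain ⟨a, ha⟩ := hA
  obtain ⟨b, hβ, a', -, hβ'⟩ := h a ha
  rw [recoloredArray_eq_inr_iff] at hβ hβ'
  obtain rfl : a = a' := smul_right_injective (K × K) hg (hβ.1.1.symm.trans hβ'.1.1)
  exact Bool.eq_iff_iff.2 (hβ.2.symm.trans hβ'.2)

theorem Alternates.not_isMixed_of_inr {β : Bool} {γ : (K × K) ⊕ Bool}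
    (h : Alternates (recoloredArray g ν) (Sum.inr β) γ A) : ¬ IsMixed g A := by
  have hA {a : K × K} (ha : a ∈ A) : a ≠ (0, 1) ∧ (a ∈ recolorClass g ↔ β = true) := by
    obtain ⟨b, hβ, -⟩ := h a ha
    obtain ⟨⟨-, hne⟩, hβ⟩ := recoloredArray_eq_inr_iff.1 hβ
    exact ⟨hne, hβ⟩
  rintro (h01 | ⟨⟨a, ha, haB⟩, a', ha', haB'⟩)
  · exact (hA h01).1 rfl
  · exact haB' ((hA ha').2.2 ((hA ha).2.1 haB))

theorem Alternates.exists_recoloredArray_smul_eq {β : Bool}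
    (h : Alternates (recoloredArray g ν) (Sum.inr β) (Sum.inl c) A) (ha : a ∈ A) :
    a ≠ (0, 1) ∧ ∃ a' ∈ A, recoloredArray g ν a' (g • a) = Sum.inl c := by
  obtain ⟨b, hβ, a', ha', hc⟩ := h a ha
  obtain ⟨⟨rfl, hne⟩, -⟩ := recoloredArray_eq_inr_iff.1 hβ
  exact ⟨hne, a', ha', hc⟩

/- The edge `{e, g • e}` has color `(1 - g) • e` before the recoloring, so a vertex of `A` on it
would have lost its edge of that color. -/
theorem Alternates.notMem_of_inr_inl {β : Bool} (hν : ν ≠ 1) (hg : g ≠ 0) {e : K × K}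
    (h : Alternates (recoloredArray g ν) (Sum.inr β) (Sum.inl ((1 - g) • e)) A) : e ∉ A := by
  intro he
  obtain ⟨hne, a', -, hc⟩ := h.exists_recoloredArray_smul_eq he
  obtain ⟨hbase, hrec⟩ := recoloredArray_eq_inl_iff.1 hc
  obtain rfl : a' = e :=
    baseColor_col_injective hν (g • e) (hbase.trans (baseColor_smul_right hν hg e).symm)
  exact hne (hrec rfl)

end Field

section PrimeField

variable {p : ℕ} [Fact p.Prime] {g ν : ZMod p} {a b c c' : ZMod p × ZMod p}
  {A : Set (ZMod p × ZMod p)}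

theorem Alternates.mem_of_baseColor_eq (h : Alternates (baseColor ν) c c' A)
    (hν : ¬ IsSquare ν) (hcc : c ≠ c') (hA : A.Nonempty) (hab : baseColor ν a b = c) : a ∈ A := by
  have hν1 : ν ≠ 1 := fun h1 => hν (h1 ▸ IsSquare.one)
  obtain ⟨a₀, ha₀⟩ := hA
  obtain ⟨b₀, hc, -⟩ := h a₀ ha₀
  have huniv := (h.kickInvariant hν1).eq_univ_of_pure_shift hν
    (fun h0 => hcc (sub_eq_zero.1 (Prod.ext h0.1 h0.2)).symm) ⟨_, a₀, ha₀, b₀, hc, rfl⟩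
  obtain ⟨a', ha', b', hc', h_eq⟩ := huniv.ge (Set.mem_univ (a.1, b.2))
  obtain ⟨h₁, h₂⟩ := Prod.mk.inj h_eq
  have hsnd := ((baseColor_eq_iff hν1).1 hab).2
  have hsnd' := ((baseColor_eq_iff hν1).1 hc').2
  rw [h₁, h₂] at hsnd'
  exact (Prod.ext h₁ (by linear_combination hsnd - hsnd') : a' = a) ▸ ha'

theorem Alternates.eq_of_inl_inl (h : Alternates (recoloredArray g ν) (Sum.inl c) (Sum.inl c') A)
    (h' : Alternates (recoloredArray g ν) (Sum.inl c') (Sum.inl c) A) (hν : ¬ IsSquare ν)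
    (hg0 : g ≠ 0) (hg1 : g ≠ 1) (hA : A.Nonempty) : c = c' := by
  by_contra hcc
  have hν1 : ν ≠ 1 := fun h1 => hν (h1 ▸ IsSquare.one)
  have hd : 1 - g ≠ 0 := sub_ne_zero.2 hg1.symm
  have hcolor (c : ZMod p × ZMod p) :
      baseColor ν ((1 - g)⁻¹ • c) (g • (1 - g)⁻¹ • c) = c := by
    rw [baseColor_smul_right hν1 hg0, smul_inv_smul₀ hd]
  have hkept {c c' : ZMod p × ZMod p} (hcc : c ≠ c')
      (h : Alternates (recoloredArray g ν) (Sum.inl c) (Sum.inl c') A) :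
      (1 - g)⁻¹ • c = (0, 1) := by
    obtain ⟨b, hb, -⟩ :=
      h _ (h.baseColor_of_recoloredArray.mem_of_baseColor_eq hν hcc hA (hcolor c))
    obtain ⟨hbase, hrec⟩ := recoloredArray_eq_inl_iff.1 hb
    exact hrec (baseColor_row_injective hν1 _ (hbase.trans (hcolor c).symm))
  exact hcc (smul_right_injective _ (inv_ne_zero hd)
    ((hkept hcc h).trans (hkept (Ne.symm hcc) h').symm))

theorem Alternates.false_of_inr_inl {β : Bool} (hp : 5 ≤ p)
    (h : Alternates (recoloredArray g ν) (Sum.inr β) (Sum.inl c) A)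
    (hg : GeomSumsExhaust g) (hgs : ¬ IsSquare g) (hνs : ¬ IsSquare ν)
    (hν : ∀ t, ν * (g * t ^ 2 - (1 - g) * t) ≠ 1) (hA : A.Nonempty) : False := by
  have hg0 : g ≠ 0 := fun h0 => hgs (h0 ▸ IsSquare.zero)
  have hd : 1 - g ≠ 0 := sub_ne_zero.2 fun h1 => hgs (h1 ▸ IsSquare.one)
  have hν1 : ν ≠ 1 := fun h1 => hνs (h1 ▸ IsSquare.one)
  obtain ⟨f, rfl⟩ : ∃ f, (1 - g) • f = c := ⟨(1 - g)⁻¹ • c, smul_inv_smul₀ hd c⟩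
  have hflow := kickInvariant_of_forall_exists_baseColor_eq hν1 hg0 fun a ha => by
    obtain ⟨-, a', ha', hc⟩ := h.exists_recoloredArray_smul_eq ha
    exact ⟨a', ha', (recoloredArray_eq_inl_iff.1 hc).1⟩
  exact h.not_isMixed_of_inr
    (hflow.isMixed hp hg hgs hνs hν hA (h.notMem_of_inr_inl hν1 hg0))

theorem isAcyclicArray_recoloredArray (hp : 5 ≤ p) (hg : GeomSumsExhaust g)
    (hgs : ¬ IsSquare g) (hνs : ¬ IsSquare ν) (hν : ∀ t, ν * (g * t ^ 2 - (1 - g) * t) ≠ 1) :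
    IsAcyclicArray (recoloredArray g ν) := by
  have hg0 : g ≠ 0 := fun h0 => hgs (h0 ▸ IsSquare.zero)
  have hg1 : g ≠ 1 := fun h1 => hgs (h1 ▸ IsSquare.one)
  have hν1 : ν ≠ 1 := fun h1 => hνs (h1 ▸ IsSquare.one)
  refine ⟨recoloredArray_row_injective hν1, recoloredArray_col_injective hν1 hg0, ?_⟩
  rintro (c | β) (c' | β') A hne hA h h'
  · exact hne (congrArg Sum.inl (h.eq_of_inl_inl h' hνs hg0 hg1 hA))
  · exact h'.false_of_inr_inl hp hg hgs hνs hν hA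
  · exact h.false_of_inr_inl hp hg hgs hνs hν hA
  · exact hne (congrArg Sum.inr (h.eq_of_inr_inr hA hg0))

end PrimeField

end RecoloredArray

section Parameters

theorem geomSumsExhaust_of_forall_exists_pow {K : Type*} [Field K] {g : K} (hg : g ≠ 1)
    (hpow : ∀ a, a ≠ 0 → ∃ k : ℕ, g ^ k = a) : GeomSumsExhaust g := by
  intro s hs
  obtain ⟨k, hk⟩ := hpow (1 - (1 - g) * s) (sub_ne_zero.2 hs.symm)
  refine ⟨k, mul_left_cancel₀ (sub_ne_zero.2 hg.symm) ?_⟩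
  rw [mul_neg_geom_sum, hk, sub_sub_cancel]

theorem exists_geomSumsExhaust_not_isSquare {K : Type*} [Field K] [Finite K]
    (hK : ringChar K ≠ 2) : ∃ g : K, GeomSumsExhaust g ∧ ¬ IsSquare g := by
  obtain ⟨u, hu⟩ := IsCyclic.exists_monoid_generator (α := Kˣ)
  have hpow (a : K) (ha : a ≠ 0) : ∃ k : ℕ, (u : K) ^ k = a := by
    obtain ⟨k, hk⟩ := hu (Units.mk0 a ha)
    exact ⟨k, by simpa using congrArg Units.val hk⟩
  have hu : ¬ IsSquare (u : K) := by
    intro hsq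
    obtain ⟨a, ha⟩ := FiniteField.exists_nonsquare hK
    obtain ⟨k, rfl⟩ := hpow a fun h0 => ha (h0 ▸ IsSquare.zero)
    exact ha (hsq.pow k)
  exact ⟨u, geomSumsExhaust_of_forall_exists_pow (fun h1 => hu (h1 ▸ IsSquare.one)) hpow, hu⟩

variable {p : ℕ} [Fact p.Prime]

theorem exists_not_isSquare_sq_add_one (hp : p ≠ 2) : ∃ r : ZMod p, ¬ IsSquare (r ^ 2 + 1) := by
  by_contra! h
  obtain ⟨a, ha⟩ := FiniteField.exists_nonsquare (F := ZMod p) (by rwa [ZMod.ringChar_zmod_n])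
  refine ha (forall_of_forall_add one_ne_zero IsSquare.zero ?_ a)
  rintro _ ⟨r, rfl⟩
  simpa only [sq] using h r

/- With `ν` the inverse of `((1 - g) * r / 2) ^ 2 / g`, the equation in `t` has discriminant
`(1 - g) ^ 2 * (r ^ 2 + 1)`. -/
theorem exists_not_isSquare_and_mul_ne_one (hp : p ≠ 2) {g : ZMod p} (hg : ¬ IsSquare g) :
    ∃ ν : ZMod p, ¬ IsSquare ν ∧ ∀ t, ν * (g * t ^ 2 - (1 - g) * t) ≠ 1 := by
  obtain ⟨r, hr⟩ := exists_not_isSquare_sq_add_one hp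
  have hd : 1 - g ≠ 0 := sub_ne_zero.2 fun h1 => hg (h1 ▸ IsSquare.one)
  have hr0 : r ≠ 0 := fun h0 => hr (by simp [h0])
  have h2 : (2 : ZMod p) ≠ 0 := Ring.two_ne_zero (by rwa [ZMod.ringChar_zmod_n])
  refine ⟨g * (2 / ((1 - g) * r)) ^ 2, ?_, fun t ht => hr ⟨(2 * g * t - (1 - g)) / (1 - g), ?_⟩⟩
  · rintro ⟨s, hs⟩
    refine hg ⟨s * ((1 - g) * r) / 2, ?_⟩
    field_simp at hs ⊢
    linear_combination hs
  · field_simp at ht ⊢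
    linear_combination -ht

end Parameters

theorem exists_isAcyclicArray (p : ℕ) [Fact p.Prime] (hp : 5 ≤ p) :
    ∃ C : ZMod p × ZMod p → ZMod p × ZMod p → (ZMod p × ZMod p) ⊕ Bool, IsAcyclicArray C := by
  have hp2 : p ≠ 2 := by omega
  obtain ⟨g, hg, hgs⟩ :=
    exists_geomSumsExhaust_not_isSquare (K := ZMod p) (by rwa [ZMod.ringChar_zmod_n])
  obtain ⟨ν, hνs, hν⟩ := exists_not_isSquare_and_mul_ne_one hp2 hgs
  exact ⟨recoloredArray g ν, isAcyclicArray_recoloredArray hp hg hgs hνs hν⟩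

/-- For every odd prime `p ≥ 5`, `K_{p²,p²}` admits an acyclic proper edge coloring
using `p² + 2` colors. -/
theorem stmt2 (p : ℕ) (hp : p.Prime) (hodd : Odd p) (hp5 : 5 ≤ p) :
    ∃ C : (completeBipartiteGraph (Fin (p ^ 2)) (Fin (p ^ 2))).edgeSet → Fin (p ^ 2 + 2),
      IsProperEdgeColoring (completeBipartiteGraph (Fin (p ^ 2)) (Fin (p ^ 2))) C ∧
      IsAcyclicEdgeColoring (completeBipartiteGraph (Fin (p ^ 2)) (Fin (p ^ 2))) C := by
  have : Fact p.Prime := ⟨hp⟩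
  obtain ⟨C, hC⟩ := exists_isAcyclicArray p hp5
  have vertices : Fin (p ^ 2) ≃ ZMod p × ZMod p :=
    Fintype.equivOfCardEq (by simp [ZMod.card, sq])
  have colors : (ZMod p × ZMod p) ⊕ Bool ≃ Fin (p ^ 2 + 2) :=
    Fintype.equivOfCardEq (by simp [ZMod.card, sq])
  exact (hC.congr vertices vertices colors).exists_edgeColoring
end

section
/- For every odd prime p, the acyclic chromatic index of the complete bipartite graph K_{p,p} equals p + 2. -/
open SimpleGraph

/-!
In a proper coloring of `K_{n,n}` every color class is a matching, so a bichromatic cycle amounts to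
a set of rows and a set of columns of the array of colors spanned by two different colors.

Lower bound, for odd `n ≥ 3`: a color occurring in all rows is unique, so with at most `n + 1`
colors a count of the `n ^ 2` cells leaves one color `c` occurring in all rows and makes every other
color miss exactly one row. Complete the color classes to permutations. Since no union of cycles of
`τ⁻¹ * σ` avoids the missing rows, the quotient of the completion of any other color by that of `c`
is an `n`-cycle, and so all completions have the same sign. Let `e` be the color of the cell added
to complete a color `d ≠ c`. The completions of `d` and `e` agree in this cell, and their quotient
is an `(n - 1)`-cycle, which is odd: a contradiction.

Upper bound: in the addition table of `ℤ/p`, recolor the cells `(x, -r x)` with `x ≠ 0`, where `r`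
is a primitive root, by a new color, except for the cell with `x = 1`, which gets another new
color. Alternating between two colors moves the rows by a translation `x ↦ x + t` or by a map
`x ↦ c + r x`. These maps act transitively, apart from the fixed point of the latter, and so every
alternating path reaches a row in which one of its two colors is missing.
-/

section ColorClass

variable {V : Type*} {G M N : SimpleGraph V} {T : Set V} {k : ℕ}

/-- The spanning subgraph formed by the edges of color `c`. -/
def colorClass {κ : Type*} (C : G.edgeSet → κ) (c : κ) : SimpleGraph V where
  Adj u v := ∃ h : G.Adj u v, C ⟨s(u, v), h⟩ = c
  symm := ⟨fun u v ⟨h, hc⟩ ↦ ⟨h.symm, by simpa only [Sym2.eq_swap] using hc⟩⟩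
  loopless := ⟨fun v ⟨h, _⟩ ↦ G.loopless.irrefl v h⟩

lemma isProperEdgeColoring_iff_forall_colorClass {C : G.edgeSet → Fin k} :
    IsProperEdgeColoring G C ↔
      ∀ c v, ((colorClass C c).neighborSet v).Subsingleton := by
  constructor
  · rintro hC c v u ⟨hu, huc⟩ w ⟨hw, hwc⟩
    by_contra huw
    exact hC ⟨s(v, u), hu⟩ ⟨s(v, w), hw⟩ (Subtype.coe_ne_coe.mp (mt Sym2.congr_right.mp huw))
      ⟨v, by simp, by simp⟩ (huc.trans hwc.symm)
  · rintro h ⟨e, he⟩ ⟨f, hf⟩ hef ⟨v, hve, hvf⟩ heq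
    obtain ⟨u, rfl⟩ := Sym2.mem_iff_exists.mp hve
    obtain ⟨w, rfl⟩ := Sym2.mem_iff_exists.mp hvf
    obtain rfl := h _ v ⟨he, rfl⟩ ⟨hf, heq.symm⟩
    exact hef rfl

lemma isAcyclicEdgeColoring_iff_forall_isAcyclic {C : G.edgeSet → Fin k} :
    IsAcyclicEdgeColoring G C ↔ ∀ c d, (colorClass C c ⊔ colorClass C d).IsAcyclic := by
  constructor
  · intro hC c d v w hw
    have hle : colorClass C c ⊔ colorClass C d ≤ G :=
      sup_le (fun _ _ h ↦ h.1) (fun _ _ h ↦ h.1)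
    refine hC v (w.mapLe hle) (hw.mapLe hle) ⟨c, d, fun e he ↦ ?_⟩
    have hadj := w.edges_subset_edgeSet (w.edges_mapLe_eq_edges hle ▸ he)
    induction e with | _ u v =>
    exact hadj.imp Exists.choose_spec Exists.choose_spec
  · rintro h v w hw ⟨c, d, hcd⟩
    have hadj : ∀ e ∈ w.edges, e ∈ (colorClass C c ⊔ colorClass C d).edgeSet := by
      intro e he
      induction e with | _ u v =>
      exact (hcd _ he).imp (⟨_, ·⟩) (⟨_, ·⟩)
    exact h c d (w.transfer _ hadj) (hw.transfer hadj)

/-- `Spans M T` says that no vertex of `T` is isolated in the subgraph of `M` induced by `T`. For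
two matchings `M` and `N`, the sets spanned by both are the unions of the cycles of `M ⊔ N`. -/
def Spans (M : SimpleGraph V) (T : Set V) : Prop :=
  ∀ v ∈ T, ∃ u ∈ T, M.Adj v u

lemma exists_subsingleton_neighborSet [Finite V] [Nonempty V] (hG : G.IsAcyclic) :
    ∃ v, (G.neighborSet v).Subsingleton := by
  obtain ⟨u, v, p, hp, hmax⟩ := Walk.exists_isPath_forall_isPath_length_le_length G
  refine ⟨u, Set.subsingleton_of_forall_eq p.snd fun w hw ↦ hG.eq_snd_of_adj_start hp hw ?_⟩
  by_contra hwp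
  have := hmax _ _ _ (hp.cons (h := hw.symm) hwp)
  simp at this

lemma exists_adj_and_adj_of_isAcyclic [Finite V] (h : (M ⊔ N).IsAcyclic) (hT : T.Nonempty)
    (hM : Spans M T) (hN : Spans N T) : ∃ v u, M.Adj v u ∧ N.Adj v u := by
  have := hT.to_subtype
  obtain ⟨⟨v, hv⟩, hsub⟩ := exists_subsingleton_neighborSet (h.induce T)
  obtain ⟨u, hu, hMu⟩ := hM v hv
  obtain ⟨w, hw, hNw⟩ := hN v hv
  obtain rfl : u = w :=
    congrArg Subtype.val (@hsub ⟨u, hu⟩ (Or.inl hMu) ⟨w, hw⟩ (Or.inr hNw))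
  exact ⟨v, u, hMu, hNw⟩

lemma spans_support_of_isCycle (hGMN : G ≤ M ⊔ N) (hN : ∀ v, (N.neighborSet v).Subsingleton)
    {v : V} {w : G.Walk v v} (hw : w.IsCycle) : Spans M {u | u ∈ w.support} := by
  intro x hx
  obtain ⟨u₁, u₂, hne, hnbr⟩ := Set.ncard_eq_two.mp (hw.ncard_neighborSet_toSubgraph_eq_two hx)
  have h₁ : w.toSubgraph.Adj x u₁ := hnbr.ge (Set.mem_insert _ _)
  have h₂ : w.toSubgraph.Adj x u₂ := hnbr.ge (Set.mem_insert_of_mem _ rfl)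
  have hmem {u : V} (h : w.toSubgraph.Adj x u) : u ∈ w.support :=
    w.mem_verts_toSubgraph.mp h.snd_mem
  rcases hGMN h₁.adj_sub, hGMN h₂.adj_sub with ⟨hM₁ | hN₁, hM₂ | hN₂⟩
  · exact ⟨u₁, hmem h₁, hM₁⟩
  · exact ⟨u₁, hmem h₁, hM₁⟩
  · exact ⟨u₂, hmem h₂, hM₂⟩
  · exact absurd (hN x hN₁ hN₂) hne

lemma isAcyclic_of_subsingleton_neighborSet (hM : ∀ v, (M.neighborSet v).Subsingleton) :
    M.IsAcyclic := fun v _ hw ↦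
  hw.snd_ne_penultimate (hM v (Walk.adj_snd hw.not_nil) (Walk.adj_penultimate hw.not_nil).symm)

lemma isAcyclicEdgeColoring_iff_forall_spans [Finite V] {C : G.edgeSet → Fin k}
    (hC : IsProperEdgeColoring G C) :
    IsAcyclicEdgeColoring G C ↔ ∀ c d (T : Set V), T.Nonempty →
      Spans (colorClass C c) T → Spans (colorClass C d) T → c = d := by
  rw [isAcyclicEdgeColoring_iff_forall_isAcyclic]
  rw [isProperEdgeColoring_iff_forall_colorClass] at hC
  constructor
  · intro h c d T hT hc hd
    obtain ⟨v, u, ⟨_, huc⟩, ⟨_, hud⟩⟩ := exists_adj_and_adj_of_isAcyclic (h c d) hT hc hd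
    exact huc.symm.trans hud
  · intro h c d v w hw
    obtain rfl : c = d := h c d {u | u ∈ w.support} ⟨v, w.start_mem_support⟩
      (spans_support_of_isCycle le_rfl (hC d) hw)
      (spans_support_of_isCycle (sup_comm _ _).le (hC c) hw)
    have hacyclic : (colorClass C c ⊔ colorClass C c).IsAcyclic := by
      rw [sup_idem]
      exact isAcyclic_of_subsingleton_neighborSet (hC c)
    exact hacyclic w hw

end ColorClass

section Array

variable {α β κ : Type*} {F : α → β → κ} {c d : κ} {S : Set α} {R : Set β}

/-- In the array `F`, the color `c` spans the rows `S` and the columns `R` if each of these rows has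
a `c` in one of these columns, and vice versa. -/
def ColorSpans (F : α → β → κ) (c : κ) (S : Set α) (R : Set β) : Prop :=
  (∀ x ∈ S, ∃ y ∈ R, F x y = c) ∧ ∀ y ∈ R, ∃ x ∈ S, F x y = c

/-- The arrays `F x y` of colors of the edges `xy` in the acyclic proper edge colorings of the
complete bipartite graph on `α` and `β`: the vertex set of a bichromatic cycle consists of rows and
columns spanned by two colors. -/
structure IsAcyclicArray_s3 (F : α → β → κ) : Prop where
  row_injective : ∀ x, Function.Injective (F x)
  col_injective : ∀ y, Function.Injective (F · y)
  eq_of_colorSpans : ∀ {c d : κ} {S : Set α} {R : Set β}, S.Nonempty →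
    ColorSpans F c S R → ColorSpans F d S R → c = d

lemma ColorSpans.exists_mem (hc : ColorSpans F c S R) (hd : ColorSpans F d S R) {x : α}
    (hx : x ∈ S) : ∃ x' ∈ S, ∃ y, F x y = c ∧ F x' y = d := by
  obtain ⟨y, hy, hxy⟩ := hc.1 x hx
  obtain ⟨x', hx', hx'y⟩ := hd.2 y hy
  exact ⟨x', hx', y, hxy, hx'y⟩

lemma colorSpans_image {f : α → β} (h : ∀ x ∈ S, F x (f x) = c) :
    ColorSpans F c S (f '' S) :=
  ⟨fun x hx ↦ ⟨f x, Set.mem_image_of_mem f hx, h x hx⟩,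
    Set.forall_mem_image.mpr fun x hx ↦ ⟨x, hx, h x hx⟩⟩

lemma IsAcyclicArray_s3.comp {α' β' κ' : Type*} (hF : IsAcyclicArray_s3 F) {e : α' → α} {f : β' → β}
    {g : κ → κ'} (he : Function.Injective e) (hf : Function.Injective f)
    (hg : Function.Injective g) : IsAcyclicArray_s3 fun x y ↦ g (F (e x) (f y)) where
  row_injective x := hg.comp ((hF.row_injective (e x)).comp hf)
  col_injective y := hg.comp ((hF.col_injective (f y)).comp he)
  eq_of_colorSpans {c d S R} hS hc hd := by
    have hspans {c : κ} (h : ColorSpans (fun x y ↦ g (F (e x) (f y))) (g c) S R) :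
        ColorSpans F c (e '' S) (f '' R) := by
      simpa only [ColorSpans, Set.forall_mem_image, Set.exists_mem_image, hg.eq_iff] using h
    obtain ⟨x, hx⟩ := hS
    obtain ⟨y, -, rfl⟩ := hc.1 x hx
    obtain ⟨z, -, rfl⟩ := hd.1 x hx
    exact congrArg g (hF.eq_of_colorSpans ⟨e x, Set.mem_image_of_mem e hx⟩ (hspans hc) (hspans hd))

/-- The colors of the edges of the complete bipartite graph on `α` and `β`, as an array. -/
def colorArray (C : (completeBipartiteGraph α β).edgeSet → κ) (x : α) (y : β) : κ :=
  C ⟨s(Sum.inl x, Sum.inr y), by simp⟩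

lemma colorArray_surjective :
    Function.Surjective (colorArray : ((completeBipartiteGraph α β).edgeSet → κ) → α → β → κ) := by
  intro F
  have hcell : ∀ e : (completeBipartiteGraph α β).edgeSet,
      ∃ q : α × β, s(Sum.inl q.1, Sum.inr q.2) = (e : Sym2 (α ⊕ β)) := fun e ↦
    edgeSet_completeBipartiteGraph.le e.2
  choose cell hcell using hcell
  refine ⟨fun e ↦ F (cell e).1 (cell e).2, funext₂ fun x y ↦ ?_⟩
  have := hcell ⟨s(Sum.inl x, Sum.inr y), by simp⟩
  grind [colorArray]

section

variable {C : (completeBipartiteGraph α β).edgeSet → κ}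

@[simp] lemma colorClass_adj_inl_inr {x : α} {y : β} :
    (colorClass C c).Adj (Sum.inl x) (Sum.inr y) ↔ colorArray C x y = c := by
  simp [colorClass, colorArray]

@[simp] lemma colorClass_adj_inr_inl {x : α} {y : β} :
    (colorClass C c).Adj (Sum.inr y) (Sum.inl x) ↔ colorArray C x y = c := by
  rw [adj_comm, colorClass_adj_inl_inr]

@[simp] lemma not_colorClass_adj_inl_inl {x x' : α} :
    ¬(colorClass C c).Adj (Sum.inl x) (Sum.inl x') := by
  simp [colorClass]

@[simp] lemma not_colorClass_adj_inr_inr {y y' : β} :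
    ¬(colorClass C c).Adj (Sum.inr y) (Sum.inr y') := by
  simp [colorClass]

lemma spans_colorClass_iff {T : Set (α ⊕ β)} :
    Spans (colorClass C c) T ↔ ColorSpans (colorArray C) c (Sum.inl ⁻¹' T) (Sum.inr ⁻¹' T) := by
  simp [Spans, ColorSpans]

end

variable {k : ℕ} {C : (completeBipartiteGraph α β).edgeSet → Fin k}

lemma isProperEdgeColoring_iff_injective_colorArray :
    IsProperEdgeColoring _ C ↔ (∀ x, Function.Injective (colorArray C x)) ∧
      ∀ y, Function.Injective (colorArray C · y) := by
  rw [isProperEdgeColoring_iff_forall_colorClass]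
  constructor
  · refine fun h ↦ ⟨fun x y y' hy ↦ Sum.inr.inj (h (colorArray C x y) (Sum.inl x) ?_ ?_),
      fun y x x' hx ↦ Sum.inl.inj (h (colorArray C x y) (Sum.inr y) ?_ ?_)⟩
    all_goals simp_all
  · rintro ⟨hrow, hcol⟩ c (x | y) (u | u) hu (w | w) hw <;>
      simp only [mem_neighborSet, colorClass_adj_inl_inr, colorClass_adj_inr_inl,
        not_colorClass_adj_inl_inl, not_colorClass_adj_inr_inr] at hu hw
    · rw [hrow x (hu.trans hw.symm)]
    · rw [hcol y (hu.trans hw.symm)]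

theorem isAcyclicArray_colorArray_iff [Finite α] [Finite β] :
    IsAcyclicArray_s3 (colorArray C) ↔ IsProperEdgeColoring _ C ∧ IsAcyclicEdgeColoring _ C := by
  constructor
  · intro h
    have hC := isProperEdgeColoring_iff_injective_colorArray.mpr ⟨h.row_injective, h.col_injective⟩
    refine ⟨hC, (isAcyclicEdgeColoring_iff_forall_spans hC).mpr fun c d T hT hc hd ↦ ?_⟩
    rw [spans_colorClass_iff] at hc hd
    obtain ⟨x | y, hv⟩ := hT
    · exact h.eq_of_colorSpans ⟨x, hv⟩ hc hd
    · obtain ⟨x, hx, -⟩ := hc.2 y hv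
      exact h.eq_of_colorSpans ⟨x, hx⟩ hc hd
  · rintro ⟨hC, hacyclic⟩
    rw [isAcyclicEdgeColoring_iff_forall_spans hC] at hacyclic
    obtain ⟨hrow, hcol⟩ := isProperEdgeColoring_iff_injective_colorArray.mp hC
    refine ⟨hrow, hcol, fun {c d S R} hS hc hd ↦ ?_⟩
    have hspans {c : Fin k} (h : ColorSpans (colorArray C) c S R) :
        Spans (colorClass C c) (Sum.inl '' S ∪ Sum.inr '' R) := by
      simpa [spans_colorClass_iff, Set.preimage_image_eq _ Sum.inl_injective,
        Set.preimage_image_eq _ Sum.inr_injective] using h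
    exact hacyclic c d _ ((hS.image _).inl) (hspans hc) (hspans hd)

lemma exists_acyclicEdgeColoring_iff_exists_isAcyclicArray [Finite α] [Finite β] :
    (∃ C : (completeBipartiteGraph α β).edgeSet → Fin k,
      IsProperEdgeColoring _ C ∧ IsAcyclicEdgeColoring _ C) ↔
        ∃ F : α → β → Fin k, IsAcyclicArray_s3 F := by
  simp only [colorArray_surjective.exists, isAcyclicArray_colorArray_iff]

end Array

section LowerBound

open Equiv Finset

lemma exists_eq_and_forall_ne_eq {ι : Type*} [Fintype ι] {m : ℕ} {f : ι → ℕ}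
    (hι : Fintype.card ι ≤ m + 2) (hsum : ∑ i, f i = (m + 1) * (m + 1)) (hle : ∀ i, f i ≤ m + 1)
    (huniq : ∀ i j, f i = m + 1 → f j = m + 1 → i = j) :
    ∃ i, f i = m + 1 ∧ ∀ j ≠ i, f j = m := by
  classical
  obtain ⟨i, hi⟩ : ∃ i, f i = m + 1 := by
    by_contra! hne
    have hbound : ∑ i, f i ≤ Fintype.card ι * m := by
      simpa using Finset.sum_le_card_nsmul univ f m fun i _ ↦ by have := hle i; grind
    nlinarith
  have hother : ∀ j ∈ univ.erase i, f j ≤ m := fun j hj ↦ by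
    have := hle j
    grind
  have herase : f i + ∑ j ∈ univ.erase i, f j = (m + 1) * (m + 1) :=
    (add_sum_erase univ f (mem_univ i)).trans hsum
  have hcard : #(univ.erase i) ≤ m + 1 := by
    rw [card_erase_of_mem (mem_univ i), card_univ]
    lia
  have heq : ∑ j ∈ univ.erase i, f j = ∑ _ ∈ univ.erase i, m := by
    refine (sum_le_sum hother).antisymm ?_
    rw [sum_const, smul_eq_mul]
    nlinarith
  exact ⟨i, hi, fun j hj ↦ (sum_eq_sum_iff_of_le hother).mp heq j (by simpa using hj)⟩

lemma sign_of_forall_sameCycle {α : Type*} [Fintype α] [DecidableEq α] {π : Perm α}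
    {s : Finset α} {a : α} (hs : s.Nontrivial) (ha : a ∈ s) (hcycle : ∀ x ∈ s, π.SameCycle x a)
    (hfix : ∀ x ∉ s, π x = x) : Perm.sign π = -(-1) ^ #s := by
  have hmove : ∀ x ∈ s, π x ≠ x := by
    intro x hx hfixed
    obtain ⟨y, hy, hyx⟩ := hs.exists_ne x
    exact hyx (((hcycle x hx).trans (hcycle y hy).symm).eq_of_left hfixed).symm
  have hsupport : π.support = s := by
    ext x
    rw [Perm.mem_support]
    exact ⟨fun hx ↦ by_contra fun hxs ↦ hx (hfix x hxs), hmove x⟩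
  have hπ : π.IsCycle :=
    ⟨a, hmove a ha, fun x hx ↦ (hcycle x (hsupport ▸ Perm.mem_support.mpr hx)).symm⟩
  rw [hπ.sign, hsupport]

open scoped Classical in
/-- The rows of the array `F` in which the color `c` occurs. -/
noncomputable def colorRows {α β κ : Type*} [Fintype α] (F : α → β → κ) (c : κ) : Finset α :=
  {x | ∃ y, F x y = c}

lemma mem_colorRows {α β κ : Type*} [Fintype α] {F : α → β → κ} {c : κ} {x : α} :
    x ∈ colorRows F c ↔ ∃ y, F x y = c := by
  simp [colorRows]

lemma sum_card_colorRows {α β κ : Type*} [Fintype α] [Fintype β] [Fintype κ] {F : α → β → κ}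
    (hF : ∀ x, Function.Injective (F x)) :
    ∑ c, #(colorRows F c) = Fintype.card α * Fintype.card β := by
  classical
  have hrow (x : α) : ({c | x ∈ colorRows F c} : Finset κ) = univ.image (F x) := by
    ext c
    simp [mem_colorRows]
  calc ∑ c, #(colorRows F c)
      = ∑ x, #{c | x ∈ colorRows F c} := by
        simpa [bipartiteAbove, bipartiteBelow] using
          sum_card_bipartiteAbove_eq_sum_card_bipartiteBelow (s := univ) (t := univ)
            fun c x ↦ x ∈ colorRows F c
    _ = Fintype.card α * Fintype.card β := by simp [hrow, card_image_of_injective _ (hF _)]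

variable {α κ : Type*} [Fintype α] {F : α → α → κ} {c d : κ} {σ τ : Perm α} {a b : α}

/-- The permutation `σ` extends the partial permutation of rows and columns formed by the cells of
color `c`. -/
def CompletesColor (F : α → α → κ) (c : κ) (σ : Perm α) : Prop :=
  ∀ x ∈ colorRows F c, F x (σ x) = c

lemma exists_completesColor (hF : ∀ y, Function.Injective (F · y)) (c : κ) :
    ∃ σ, CompletesColor F c σ := by
  classical
  cases isEmpty_or_nonempty α
  · exact ⟨1, isEmptyElim⟩
  have hcell : ∀ x ∈ colorRows F c, ∃ y, F x y = c := fun x hx ↦ mem_colorRows.mp hx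
  choose! f hf using hcell
  have hinj : Set.InjOn f (colorRows F c) := fun x hx x' hx' hxx' ↦
    hF (f x) ((hf x hx).trans (hxx' ▸ hf x' hx').symm)
  obtain ⟨g, hg⟩ := Finset.exists_equiv_extend_of_card_eq (t := univ) rfl
    (subset_univ _) hinj
  exact ⟨g.trans (Equiv.subtypeUnivEquiv mem_univ), fun x hx ↦ by simpa [hg x hx] using hf x hx⟩

namespace IsAcyclicArray_s3

lemma exists_sameCycle_notMem_colorRows (hF : IsAcyclicArray_s3 F) (hcd : c ≠ d)
    (hσ : CompletesColor F c σ) (hτ : CompletesColor F d τ) (x : α) :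
    ∃ z, (τ⁻¹ * σ).SameCycle x z ∧ (z ∉ colorRows F c ∨ z ∉ colorRows F d) := by
  by_contra! h
  -- The rows on the cycle of `x` and their images under `σ` would form a bichromatic cycle.
  let S := {z | (τ⁻¹ * σ).SameCycle x z}
  have hS : (τ⁻¹ * σ) '' S = S := by
    rw [Equiv.image_eq_preimage_symm]
    ext z
    exact Perm.sameCycle_symm_apply_right
  have himage : σ '' S = τ '' S := by
    nth_rw 2 [← hS]
    rw [Set.image_image]
    simp
  exact hcd (hF.eq_of_colorSpans ⟨x, Perm.SameCycle.refl _ x⟩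
    (colorSpans_image fun z hz ↦ hσ z (h z hz).1)
    (himage ▸ colorSpans_image fun z hz ↦ hτ z (h z hz).2))

lemma eq_of_colorRows_eq_univ [Nonempty α] (hF : IsAcyclicArray_s3 F) (hc : colorRows F c = univ)
    (hd : colorRows F d = univ) : c = d := by
  by_contra hcd
  obtain ⟨σ, hσ⟩ := exists_completesColor hF.col_injective c
  obtain ⟨τ, hτ⟩ := exists_completesColor hF.col_injective d
  obtain ⟨z, -, hz⟩ :=
    hF.exists_sameCycle_notMem_colorRows hcd hσ hτ (Classical.arbitrary α)
  simp [hc, hd] at hz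

lemma exists_colorRows_eq_univ [Nonempty α] [DecidableEq α] [Fintype κ] (hF : IsAcyclicArray_s3 F)
    (hκ : Fintype.card κ ≤ Fintype.card α + 1) :
    ∃ c, colorRows F c = univ ∧ ∀ d ≠ c, ∃ a, colorRows F d = {a}ᶜ := by
  obtain ⟨m, hm⟩ := Nat.exists_eq_add_one_of_ne_zero (Fintype.card_ne_zero (α := α))
  have hfull {c : κ} : #(colorRows F c) = m + 1 ↔ colorRows F c = univ := by
    rw [← card_eq_iff_eq_univ, hm]
  have hsum : ∑ c, #(colorRows F c) = (m + 1) * (m + 1) := by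
    rw [sum_card_colorRows hF.row_injective, hm]
  obtain ⟨c, hc, hother⟩ := exists_eq_and_forall_ne_eq (by rwa [hm] at hκ) hsum
    (fun c ↦ by simpa only [hm] using card_le_univ (colorRows F c))
    fun c d hc hd ↦ hF.eq_of_colorRows_eq_univ (hfull.mp hc) (hfull.mp hd)
  refine ⟨c, hfull.mp hc, fun d hd ↦ ?_⟩
  have hmissing : #(colorRows F d)ᶜ = 1 := by
    rw [card_compl, hother d hd, hm, Nat.add_sub_cancel_left]
  obtain ⟨a, ha⟩ := card_eq_one.mp hmissing
  exact ⟨a, by rw [← ha, compl_compl]⟩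

section

variable [DecidableEq α]

lemma sameCycle_of_colorRows_eq_univ (hF : IsAcyclicArray_s3 F)
    (hc : colorRows F c = univ) (hd : colorRows F d = {a}ᶜ)
    (hσ : CompletesColor F c σ) (hτ : CompletesColor F d τ) (x : α) :
    (τ⁻¹ * σ).SameCycle x a := by
  have hcd : c ≠ d := by
    rintro rfl
    have ha : a ∈ colorRows F c := hc ▸ mem_univ a
    simp [hd] at ha
  obtain ⟨z, hxz, hz⟩ := hF.exists_sameCycle_notMem_colorRows hcd hσ hτ x
  obtain rfl : z = a := by simpa [hc, hd] using hz
  exact hxz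

lemma apply_ne_of_colorRows_eq_univ [Nontrivial α] (hF : IsAcyclicArray_s3 F)
    (hc : colorRows F c = univ) (hd : colorRows F d = {a}ᶜ)
    (hσ : CompletesColor F c σ) (hτ : CompletesColor F d τ) : σ a ≠ τ a := by
  intro h
  obtain ⟨x, hx⟩ := exists_ne a
  have hfixed : (τ⁻¹ * σ) a = a := by simp [h]
  exact hx ((hF.sameCycle_of_colorRows_eq_univ hc hd hσ hτ x).eq_of_right hfixed)

lemma sign_eq_of_colorRows_eq_univ [Nontrivial α] (hF : IsAcyclicArray_s3 F)
    (hodd : Odd (Fintype.card α)) (hc : colorRows F c = univ) (hd : colorRows F d = {a}ᶜ)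
    (hσ : CompletesColor F c σ) (hτ : CompletesColor F d τ) : Perm.sign σ = Perm.sign τ := by
  have hsign : Perm.sign (τ⁻¹ * σ) = 1 := by
    rw [sign_of_forall_sameCycle univ_nontrivial (mem_univ a)
      (fun x _ ↦ hF.sameCycle_of_colorRows_eq_univ hc hd hσ hτ x) (by simp), card_univ,
      hodd.neg_one_pow, neg_neg]
  rw [Perm.sign_mul, map_inv, inv_mul_eq_one] at hsign
  exact hsign.symm

lemma sign_ne_of_colorRows_eq_compl (hF : IsAcyclicArray_s3 F) (hodd : Odd (Fintype.card α))
    (hab : a ≠ b) (hc : colorRows F c = {a}ᶜ) (hd : colorRows F d = {b}ᶜ)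
    (hσ : CompletesColor F c σ) (hτ : CompletesColor F d τ) (h : σ a = τ a) :
    Perm.sign σ ≠ Perm.sign τ := by
  have hcd : c ≠ d := by
    rintro rfl
    exact hab (by simpa [hc] using hd)
  have hfixed : (τ⁻¹ * σ) a = a := by simp [h]
  have hcycle : ∀ x ∈ ({a}ᶜ : Finset α), (τ⁻¹ * σ).SameCycle x b := by
    intro x hx
    obtain ⟨z, hxz, hz⟩ := hF.exists_sameCycle_notMem_colorRows hcd hσ hτ x
    obtain rfl | rfl : z = a ∨ z = b := by simpa [hc, hd] using hz
    · exact absurd (hxz.eq_of_right hfixed) (by simpa using hx)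
    · exact hxz
  have hcompl : #({a}ᶜ : Finset α) = Fintype.card α - 1 := by simp [card_compl]
  have hcard : 1 < Fintype.card α := Fintype.one_lt_card_iff.mpr ⟨a, b, hab⟩
  have hnontrivial : ({a}ᶜ : Finset α).Nontrivial := by
    rw [← one_lt_card_iff_nontrivial, hcompl]
    grind
  have hsign : Perm.sign (τ⁻¹ * σ) = -1 := by
    rw [sign_of_forall_sameCycle hnontrivial (by simpa using hab.symm) hcycle
      (by simpa using hfixed), hcompl, (Nat.Odd.sub_odd hodd odd_one).neg_one_pow]
  intro heq
  simp [heq] at hsign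

end

theorem card_add_two_le [Nontrivial α] [Fintype κ] (hF : IsAcyclicArray_s3 F)
    (hodd : Odd (Fintype.card α)) : Fintype.card α + 2 ≤ Fintype.card κ := by
  classical
  by_contra! hκ
  obtain ⟨c, hc, hother⟩ := hF.exists_colorRows_eq_univ (by lia)
  have := (hF.row_injective (Classical.arbitrary α)).nontrivial
  obtain ⟨σ, hσ⟩ := exists_completesColor hF.col_injective c
  obtain ⟨d, hdc⟩ := exists_ne c
  obtain ⟨a, hd⟩ := hother d hdc
  obtain ⟨τ, hτ⟩ := exists_completesColor hF.col_injective d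
  let e := F a (τ a)
  have hae : a ∈ colorRows F e := mem_colorRows.mpr ⟨τ a, rfl⟩
  have hec : e ≠ c := fun hec ↦
    hF.apply_ne_of_colorRows_eq_univ hc hd hσ hτ <|
      hF.row_injective a ((hσ a (hc ▸ mem_univ a)).trans hec.symm)
  obtain ⟨b, he⟩ := hother e hec
  obtain ⟨ρ, hρ⟩ := exists_completesColor hF.col_injective e
  have hab : a ≠ b := by simpa [he] using hae
  have hτρ : τ a = ρ a := hF.row_injective a (hρ a hae).symm
  refine hF.sign_ne_of_colorRows_eq_compl hodd hab hd he hτ hρ hτρ ?_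
  exact (hF.sign_eq_of_colorRows_eq_univ hodd hc hd hσ hτ).symm.trans
    (hF.sign_eq_of_colorRows_eq_univ hodd hc he hσ hρ)

end IsAcyclicArray_s3

end LowerBound

section UpperBound

variable {K : Type*} [Field K]

lemma mem_of_mapsTo_affine {r : Kˣ} {c x z : K} {S : Set K}
    (hr : ∀ u : Kˣ, u ∈ Submonoid.powers r) (hr1 : (r : K) ≠ 1)
    (hS : Set.MapsTo (fun x ↦ c + r * x) S S) (hx : x ∈ S) (hxc : c + r * x ≠ x)
    (hzc : c + r * z ≠ z) : z ∈ S := by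
  -- The displacement `c + (r - 1) * w` of a point `w` is multiplied by `r` in each step.
  have hdisp {w : K} (hw : c + r * w ≠ w) : c + (r - 1) * w ≠ 0 := by grind
  have hiter : ∀ n : ℕ,
      c + (r - 1) * (fun x ↦ c + r * x)^[n] x = r ^ n * (c + (r - 1) * x) := by
    intro n
    induction n with
    | zero => simp
    | succ n ih =>
      rw [Function.iterate_succ_apply', pow_succ']
      linear_combination (r : K) * ih
  obtain ⟨n, hn⟩ := hr (Units.mk0 _ (hdisp hzc) / Units.mk0 _ (hdisp hxc))
  have hn' : (r : K) ^ n = (c + (r - 1) * z) / (c + (r - 1) * x) := by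
    simpa using congrArg Units.val hn
  have hz : (fun x ↦ c + r * x)^[n] x = z := by
    refine mul_left_cancel₀ (sub_ne_zero.mpr hr1) (add_left_cancel (a := c) ?_)
    rw [hiter, hn', div_mul_cancel₀ _ (hdisp hxc)]
  exact hz ▸ hS.iterate n hx

lemma eq_univ_of_mapsTo_add_left {p : ℕ} [Fact p.Prime] {t : ZMod p} {S : Set (ZMod p)}
    (ht : t ≠ 0) (hS : S.Nonempty) (hmap : Set.MapsTo (t + ·) S S) : S = Set.univ := by
  obtain ⟨x, hx⟩ := hS
  refine Set.eq_univ_of_forall fun z ↦ ?_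
  have hz : (t + ·)^[((z - x) / t).val] x = z := by
    rw [add_left_iterate, nsmul_eq_mul, ZMod.natCast_zmod_val, div_mul_cancel₀ _ ht]
    exact sub_add_cancel z x
  exact hz ▸ hmap.iterate _ hx

variable [DecidableEq K] {r x y c : K} {d : K ⊕ Bool} {S R : Set K}

/-- The addition table of `K`, with the line `y = -r x` except for the origin recolored by two new
colors: one for the cell in row `1`, and one for all other cells. -/
def affineArray (r x y : K) : K ⊕ Bool :=
  if y = -r * x ∧ x ≠ 0 then Sum.inr (decide (x = 1)) else Sum.inl (x + y)

lemma affineArray_eq_inl :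
    affineArray r x y = Sum.inl c ↔ x + y = c ∧ (y = -r * x → x = 0) := by
  grind [affineArray]

lemma affineArray_eq_inr {b : Bool} :
    affineArray r x y = Sum.inr b ↔ y = -r * x ∧ x ≠ 0 ∧ decide (x = 1) = b := by
  grind [affineArray]

lemma affineArray_injective (r x : K) : Function.Injective (affineArray r x) := by
  intro y y' h
  grind [affineArray]

lemma affineArray_injective_left (hr : r ≠ 0) (y : K) :
    Function.Injective (affineArray r · y) := by
  intro x x' h
  have : r * x = r * x' → x = x' := mul_left_cancel₀ hr
  grind [affineArray]

lemma eq_inr_true_of_colorSpans (hS : S.Nonempty)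
    (hc : ColorSpans (affineArray r) (Sum.inr true) S R) (hd : ColorSpans (affineArray r) d S R) :
    d = Sum.inr true := by
  have hone : ∀ x ∈ S, x = 1 := by
    intro x hx
    obtain ⟨y, -, hy⟩ := hc.1 x hx
    exact of_decide_eq_true (affineArray_eq_inr.mp hy).2.2
  obtain ⟨x, hx⟩ := hS
  obtain ⟨x', hx', y, hxy, hx'y⟩ := hc.exists_mem hd hx
  rw [← hx'y, ← hxy, hone x hx, hone x' hx']

lemma not_colorSpans_inr_false_inl {r : Kˣ} (hr : ∀ u : Kˣ, u ∈ Submonoid.powers r)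
    (hr1 : (r : K) ≠ 1) (hS : S.Nonempty)
    (hb : ColorSpans (affineArray (r : K)) (Sum.inr false) S R) :
    ¬ColorSpans (affineArray (r : K)) (Sum.inl c) S R := by
  intro hc
  have hstep : ∀ x ∈ S, x ≠ 0 ∧ x ≠ 1 ∧ c + r * x ∈ S ∧ c + r * x ≠ x := by
    intro x hx
    obtain ⟨x', hx', y, hxy, hx'y⟩ := hb.exists_mem hc hx
    obtain ⟨rfl, hx0, hx1⟩ := affineArray_eq_inr.mp hxy
    obtain ⟨hsum, hline⟩ := affineArray_eq_inl.mp hx'y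
    obtain rfl : x' = c + r * x := by linear_combination hsum
    exact ⟨hx0, of_decide_eq_false hx1, hx', fun h ↦ hx0 (by grind)⟩
  obtain ⟨x, hx⟩ := hS
  have hfixed : ∀ z ∉ S, c + r * z = z := fun z hz ↦ by
    by_contra hzc
    exact hz (mem_of_mapsTo_affine hr hr1 (fun x hx ↦ (hstep x hx).2.2.1) hx
      (hstep x hx).2.2.2 hzc)
  have hzero := hfixed 0 fun h ↦ (hstep 0 h).1 rfl
  have hone := hfixed 1 fun h ↦ (hstep 1 h).2.1 rfl
  exact hr1 (by linear_combination hone - hzero)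

lemma eq_zero_of_forall_exists_affineArray_eq_inl (hr1 : r ≠ 1)
    (h : ∀ x, ∃ y, affineArray r x y = Sum.inl c) : c = 0 := by
  have hr1' : 1 - r ≠ 0 := sub_ne_zero.mpr hr1.symm
  obtain ⟨y, hy⟩ := h (c / (1 - r))
  obtain ⟨hsum, hline⟩ := affineArray_eq_inl.mp hy
  have hy : y = -r * (c / (1 - r)) := by
    linear_combination hsum - mul_div_cancel₀ c hr1'
  simpa [hr1'] using hline hy

lemma eq_of_colorSpans_inl {p : ℕ} [Fact p.Prime] {r c d : ZMod p} {S R : Set (ZMod p)}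
    (hr1 : r ≠ 1) (hS : S.Nonempty) (hc : ColorSpans (affineArray r) (Sum.inl c) S R)
    (hd : ColorSpans (affineArray r) (Sum.inl d) S R) : c = d := by
  by_contra hcd
  have hmap : Set.MapsTo (d - c + ·) S S := by
    intro x hx
    obtain ⟨x', hx', y, hxy, hx'y⟩ := hc.exists_mem hd hx
    obtain rfl : x' = d - c + x := by
      linear_combination (affineArray_eq_inl.mp hx'y).1 - (affineArray_eq_inl.mp hxy).1
    exact hx'
  obtain rfl := eq_univ_of_mapsTo_add_left (sub_ne_zero.mpr (Ne.symm hcd)) hS hmap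
  have hzero {e : ZMod p} (he : ColorSpans (affineArray r) (Sum.inl e) Set.univ R) : e = 0 :=
    eq_zero_of_forall_exists_affineArray_eq_inl hr1 fun x ↦
      (he.1 x (Set.mem_univ x)).imp fun _ ↦ And.right
  exact hcd ((hzero hc).trans (hzero hd).symm)

theorem isAcyclicArray_affineArray {p : ℕ} [Fact p.Prime] {r : (ZMod p)ˣ}
    (hr : ∀ u : (ZMod p)ˣ, u ∈ Submonoid.powers r) (hr1 : (r : ZMod p) ≠ 1) :
    IsAcyclicArray_s3 (affineArray (r : ZMod p)) where
  row_injective := affineArray_injective _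
  col_injective := affineArray_injective_left r.ne_zero
  eq_of_colorSpans {c d S R} hS hc hd := by
    match c, d with
    | .inl c, .inl d =>
      exact congrArg Sum.inl (eq_of_colorSpans_inl hr1 hS hc hd)
    | .inr true, _ => exact (eq_inr_true_of_colorSpans hS hc hd).symm
    | _, .inr true => exact eq_inr_true_of_colorSpans hS hd hc
    | .inr false, .inr false => rfl
    | .inr false, .inl _ => exact absurd hd (not_colorSpans_inr_false_inl hr hr1 hS hc)
    | .inl _, .inr false => exact absurd hc (not_colorSpans_inr_false_inl hr hr1 hS hd)

lemma exists_isAcyclicArray_zmod {p : ℕ} [Fact p.Prime] (hp : p ≠ 2) :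
    ∃ F : ZMod p → ZMod p → ZMod p ⊕ Bool, IsAcyclicArray_s3 F := by
  obtain ⟨r, hr⟩ := IsCyclic.exists_monoid_generator (α := (ZMod p)ˣ)
  refine ⟨affineArray (r : ZMod p), isAcyclicArray_affineArray hr fun hr1 ↦ ?_⟩
  obtain ⟨n, hn⟩ := hr (-1)
  have hneg : (1 : ZMod p) = -1 := by simpa [hr1] using congrArg Units.val hn
  exact Ring.neg_one_ne_one_of_char_ne_two ((ZMod.ringChar_zmod_n p).trans_ne hp) hneg.symm

end UpperBound

/-- For every odd prime `p`, the acyclic chromatic index of `K_{p,p}` equals `p + 2`. -/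
theorem stmt3 (p : ℕ) (hp : p.Prime) (hodd : Odd p) :
    acyclicChromaticIndex (completeBipartiteGraph (Fin p) (Fin p)) = p + 2 := by
  have : Fact p.Prime := ⟨hp⟩
  have : Nontrivial (Fin p) := Fin.nontrivial_iff_two_le.mpr hp.two_le
  refine IsLeast.csInf_eq ⟨?_, fun k hk ↦ ?_⟩
  · obtain ⟨F, hF⟩ := exists_isAcyclicArray_zmod (Nat.ne_of_gt (hp.odd_iff.mp hodd))
    have hcard : Fintype.card (ZMod p ⊕ Bool) = p + 2 := by simp
    exact exists_acyclicEdgeColoring_iff_exists_isAcyclicArray.mpr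
      ⟨_, hF.comp (ZMod.finEquiv p).injective (ZMod.finEquiv p).injective
        (Fintype.equivFinOfCardEq hcard).injective⟩
  · obtain ⟨F, hF⟩ := exists_acyclicEdgeColoring_iff_exists_isAcyclicArray.mp hk
    simpa only [Fintype.card_fin] using hF.card_add_two_le (by simpa using hodd)
end
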